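/- arXiv:1208.4312 — 2 statements merged into one kernel-verified Lean document; each statement's English description precedes it below -/
import Mathlib

section
/- Fix integers n ≥ 2 and k ≥ 3, a constant b_k < 0, and δ ∈ (0, 1/2); set c_k := 2(n−1)k²(−b_k)^{2/k}, γ_k := 1/2 − 1/k, μ_k := k/2 − 1. Let ζ : (0,1) → ℝ be a solution of −(1/2)(u^{−1} − u) ζ′(u) − (4γ_k + u^{−2}) ζ(u) = u^{−6}(1 − u²)^{4γ_k} (so that ζ(u) = u^{−4} + O(u^{−2} log(1/u)) as u ↘ 0 and ζ(u) = −(1 − u²)^{4γ_k} + O((1 − u²)^{4γ_k+1}|log(1 − u²)|) as u ↗ 1). Then there exist constants A₃ > 0, B₃ ≥ B₂ > 0 and a time τ₃, all depending only on n, k, b_k, δ, such that the functions z_±(u,τ) := (1 ± δ) c_k e^{−2γ_k τ} u^{−2}(1 − u²)^{1+2γ_k} ± A₃ e^{−4γ_k τ} ζ(u) form a pair of properly ordered barriers, i.e. D_u[z₊] ≥ 0, D_u[z₋] ≤ 0, and z₋(u,τ) < z₊(u,τ), at every point of the region B₂ √(2A₃/c_k) e^{−γ_k τ} ≤ u ≤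 1 − B₃ (2A₃/c_k)^{k/2} e^{−μ_k τ}, τ ≥ τ₃. -/
open Topology Filter Asymptotics Set

/-- `γ_k = 1/2 - 1/k`. -/
noncomputable def gam (k : ℕ) : ℝ := 1/2 - 1/(k:ℝ)

/-- `μ_k = k/2 - 1`. -/
noncomputable def mu (k : ℕ) : ℝ := (k:ℝ)/2 - 1

/-- `c_k = 2(n-1)k²(-b_k)^{2/k}`. -/
noncomputable def ck (n k : ℕ) (bk : ℝ) : ℝ :=
  2 * ((n:ℝ) - 1) * (k:ℝ)^2 * (-bk) ^ ((2:ℝ)/(k:ℝ))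

/-- The quadratic operator `Q_u[Z] = Z Z'' - (1/2)(Z')² - Z Z'/u - 2(n-1)Z²/u²`. -/
noncomputable def Qop (n : ℕ) (Z : ℝ → ℝ) (u : ℝ) : ℝ :=
  Z u * deriv (deriv Z) u - (1/2) * (deriv Z u)^2
    - Z u * deriv Z u / u - 2 * ((n:ℝ) - 1) * (Z u)^2 / u^2

/-- The parabolic operator
`D_u[z] = z_τ - (1/2)(u⁻¹ - u) z_u - u⁻² z - Q_u[z]/(2(n-1))`. -/
noncomputable def Dop (n : ℕ) (z : ℝ → ℝ → ℝ) (u τ : ℝ) : ℝ :=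
  deriv (z u) τ - (1/2) * (u⁻¹ - u) * deriv (fun x => z x τ) u
    - z u τ / u^2 - Qop n (fun x => z x τ) u / (2 * ((n:ℝ) - 1))

/-- The intermediate-region barrier with sign `s` (`s = 1` upper, `s = -1` lower):
`z_± = (1 ± δ) c_k e^{-2γ_k τ} u⁻²(1-u²)^{1+2γ_k} ± A₃ e^{-4γ_k τ} ζ(u)`. -/
noncomputable def zIntPM (n k : ℕ) (bk δ A₃ : ℝ) (ζ : ℝ → ℝ) (s u τ : ℝ) : ℝ :=
  (1 + s*δ) * ck n k bk * Real.exp (-2 * gam k * τ) * u ^ (-2:ℝ) * (1 - u^2) ^ (1 + 2 * gam k)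
    + s * A₃ * Real.exp (-4 * gam k * τ) * ζ u

/-!
Put `lam = 2 γ_k`. The linear part of `D_u` annihilates the leading term
`e^{-lam τ} u⁻² (1 - u²)^{1 + lam}` and, by the equation for `ζ`, sends `± A e^{-2 lam τ} ζ` to
`± A e^{-2 lam τ} u⁻⁶ (1 - u²)^{2 lam}`, so it remains to dominate `Q_u`. Variation of parameters
gives every solution `ζ` in closed form, and the `j`-th derivative of `ζ` is
`O(u^{-4 - j} (1 - u²)^{2 lam - j})` on all of `(0, 1)`. Hence wherever
`A e^{-lam τ} ≤ β u² (1 - u²)^{1 - lam}` the second term is, together with its derivatives, at most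
a multiple of the first that is independent of `A`. As `Q_u` is quadratic, it is then at most
`C e^{-2 lam τ} u⁻⁶ (1 - u²)^{2 lam}` with `C` independent of `A`, and any `A` large compared with
`C` works.

With `T = K (2 A / c_k) e^{-lam τ}`, `B₂ = K^{1/2}` and `B₃ = K^{k/2}` the region of the theorem is
`T^{1/2} ≤ u ≤ 1 - T^{k/2}`, on which `T ≤ 4 u² (1 - u²)^{2/k}` and `2 / k = 1 - lam`.
-/

section EndWeight

/-- The weight `u ^ p (1 - u ^ 2) ^ q` on `(0, 1)`, the scale on which functions are compared near
both endpoints. -/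
noncomputable def endWeight (p q u : ℝ) : ℝ := u ^ p * (1 - u ^ 2) ^ q

variable {p p' q q' u : ℝ}

lemma one_sub_sq_pos (hu : u ∈ Ioo (0 : ℝ) 1) : 0 < 1 - u ^ 2 :=
  sub_pos.2 (pow_lt_one₀ hu.1.le hu.2 two_ne_zero)

lemma endWeight_pos (hu : u ∈ Ioo (0 : ℝ) 1) : 0 < endWeight p q u :=
  mul_pos (Real.rpow_pos_of_pos hu.1 p) (Real.rpow_pos_of_pos (one_sub_sq_pos hu) q)

lemma endWeight_zero_zero (u : ℝ) : endWeight 0 0 u = 1 := by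
  simp [endWeight]

lemma endWeight_add (hu : u ∈ Ioo (0 : ℝ) 1) :
    endWeight (p + p') (q + q') u = endWeight p q u * endWeight p' q' u := by
  rw [endWeight, endWeight, endWeight, Real.rpow_add hu.1, Real.rpow_add (one_sub_sq_pos hu)]
  ring

lemma endWeight_sub_natCast (hu : u ∈ Ioo (0 : ℝ) 1) (j : ℕ) :
    endWeight (p - j) (q - j) u = endWeight p q u / (u * (1 - u ^ 2)) ^ j := by
  rw [endWeight, endWeight, Real.rpow_sub_natCast hu.1.ne',
    Real.rpow_sub_natCast (one_sub_sq_pos hu).ne', div_mul_div_comm, mul_pow]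

lemma endWeight_intCast (a b : ℤ) (u : ℝ) :
    endWeight a b u = u ^ a * (1 - u ^ 2) ^ b := by
  rw [endWeight, Real.rpow_intCast, Real.rpow_intCast]

lemma endWeight_le_endWeight (hu : u ∈ Ioo (0 : ℝ) 1) (hp : p' ≤ p) (hq : q' ≤ q) :
    endWeight p q u ≤ endWeight p' q' u :=
  mul_le_mul (Real.rpow_le_rpow_of_exponent_ge hu.1 hu.2.le hp)
    (Real.rpow_le_rpow_of_exponent_ge (one_sub_sq_pos hu) (sub_le_self 1 (sq_nonneg u)) hq)
    (Real.rpow_nonneg (one_sub_sq_pos hu).le q) (Real.rpow_nonneg hu.1.le p')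

lemma hasDerivAt_endWeight (hu : u ∈ Ioo (0 : ℝ) 1) :
    HasDerivAt (endWeight p q)
      (p * endWeight (p - 1) q u + -2 * q * endWeight (p + 1) (q - 1) u) u := by
  have hrpow : HasDerivAt (fun v : ℝ => v ^ p) (p * u ^ (p - 1)) u :=
    Real.hasDerivAt_rpow_const (Or.inl hu.1.ne')
  have hrpow' := ((hasDerivAt_pow 2 u).const_sub 1).rpow_const (p := q)
    (Or.inl (one_sub_sq_pos hu).ne')
  refine (hrpow.mul hrpow').congr_deriv ?_
  simp only [endWeight, Real.rpow_add_one hu.1.ne']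
  push_cast
  ring

end EndWeight

section Symbol

/-- `IsSymbol m p q f`: `f` is `m` times differentiable on `(0, 1)` and each derivative of order
`j ≤ m` is `O(u ^ (p - j) (1 - u ^ 2) ^ (q - j))` there. -/
def IsSymbol : ℕ → ℝ → ℝ → (ℝ → ℝ) → Prop
  | 0, p, q, f => f =O[𝓟 (Ioo 0 1)] endWeight p q
  | m + 1, p, q, f => f =O[𝓟 (Ioo 0 1)] endWeight p q ∧ DifferentiableOn ℝ f (Ioo 0 1) ∧
      IsSymbol m (p - 1) (q - 1) (deriv f)

variable {m : ℕ} {p p' q q' : ℝ} {f g : ℝ → ℝ}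

lemma isBigO_endWeight_of_le (hp : p' ≤ p) (hq : q' ≤ q) :
    endWeight p q =O[𝓟 (Ioo 0 1)] endWeight p' q' := by
  refine IsBigO.of_bound' (eventually_principal.2 fun u hu => ?_)
  rw [Real.norm_of_nonneg (endWeight_pos hu).le, Real.norm_of_nonneg (endWeight_pos hu).le]
  exact endWeight_le_endWeight hu hp hq

namespace IsSymbol

lemma isBigO (hf : IsSymbol m p q f) : f =O[𝓟 (Ioo 0 1)] endWeight p q := by
  cases m with
  | zero => exact hf
  | succ m => exact hf.1

lemma of_succ (hf : IsSymbol (m + 1) p q f) : IsSymbol m p q f := by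
  induction m generalizing p q f with
  | zero => exact hf.1
  | succ m ih => exact ⟨hf.1, hf.2.1, ih hf.2.2⟩

lemma congr (hf : IsSymbol m p q f) (hgf : EqOn g f (Ioo 0 1)) : IsSymbol m p q g := by
  induction m generalizing p q f g with
  | zero => exact IsBigO.congr' hf hgf.symm.eventuallyEq .rfl
  | succ m ih =>
    exact ⟨hf.1.congr' hgf.symm.eventuallyEq .rfl, hf.2.1.congr hgf,
      ih hf.2.2 (hgf.deriv isOpen_Ioo)⟩

lemma mono (hf : IsSymbol m p q f) (hp : p' ≤ p) (hq : q' ≤ q) : IsSymbol m p' q' f := by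
  induction m generalizing p p' q q' f with
  | zero => exact IsBigO.trans hf (isBigO_endWeight_of_le hp hq)
  | succ m ih =>
    exact ⟨hf.1.trans (isBigO_endWeight_of_le hp hq), hf.2.1,
      ih hf.2.2 (sub_le_sub_right hp 1) (sub_le_sub_right hq 1)⟩

lemma const_mul (hf : IsSymbol m p q f) (a : ℝ) : IsSymbol m p q (fun u => a * f u) := by
  induction m generalizing p q f with
  | zero => exact IsBigO.const_mul_left hf a
  | succ m ih =>
    refine ⟨hf.1.const_mul_left a, hf.2.1.const_mul a, ?_⟩
    rw [deriv_const_mul_field']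
    exact ih hf.2.2

lemma add (hf : IsSymbol m p q f) (hg : IsSymbol m p q g) :
    IsSymbol m p q (fun u => f u + g u) := by
  induction m generalizing p q f g with
  | zero => exact IsBigO.add hf hg
  | succ m ih =>
    refine ⟨hf.1.add hg.1, hf.2.1.fun_add hg.2.1, (ih hf.2.2 hg.2.2).congr fun u hu => ?_⟩
    have hnhds := isOpen_Ioo.mem_nhds hu
    exact deriv_fun_add (hf.2.1.differentiableAt hnhds) (hg.2.1.differentiableAt hnhds)

lemma mul (hf : IsSymbol m p q f) (hg : IsSymbol m p' q' g) :
    IsSymbol m (p + p') (q + q') (fun u => f u * g u) := by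
  have hO : (fun u => f u * g u) =O[𝓟 (Ioo 0 1)] endWeight (p + p') (q + q') :=
    (hf.isBigO.mul hg.isBigO).congr' .rfl
      (eventually_principal.2 fun u hu => (endWeight_add hu).symm)
  induction m generalizing p q p' q' f g with
  | zero => exact hO
  | succ m ih =>
    refine ⟨hO, hf.2.1.fun_mul hg.2.1, ?_⟩
    have hleft := ih hf.2.2 hg.of_succ ((hf.2.2.isBigO.mul hg.isBigO).congr' .rfl
      (eventually_principal.2 fun u hu => (endWeight_add hu).symm))
    have hright := ih hf.of_succ hg.2.2 ((hf.isBigO.mul hg.2.2.isBigO).congr' .rfl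
      (eventually_principal.2 fun u hu => (endWeight_add hu).symm))
    rw [sub_add_eq_add_sub, sub_add_eq_add_sub] at hleft
    rw [← add_sub_assoc, ← add_sub_assoc] at hright
    refine (hleft.add hright).congr fun u hu => ?_
    have hnhds := isOpen_Ioo.mem_nhds hu
    exact deriv_fun_mul (hf.2.1.differentiableAt hnhds) (hg.2.1.differentiableAt hnhds)

lemma contDiffOn (hf : IsSymbol (m + 1) p q f) : ContDiffOn ℝ m f (Ioo 0 1) := by
  induction m generalizing p q f with
  | zero => exact contDiffOn_zero.2 hf.2.1.continuousOn
  | succ m ih =>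
    rw [Nat.cast_succ, contDiffOn_succ_iff_deriv_of_isOpen isOpen_Ioo]
    exact ⟨hf.2.1, by simp, ih hf.2.2⟩

lemma isBigO_iteratedDeriv (hf : IsSymbol m p q f) {j : ℕ} (hj : j ≤ m) :
    iteratedDeriv j f =O[𝓟 (Ioo 0 1)] endWeight (p - j) (q - j) := by
  induction j generalizing m p q f with
  | zero => simpa using hf.isBigO
  | succ j ih =>
    obtain ⟨m, rfl⟩ := Nat.exists_eq_add_of_le' (Nat.one_le_of_lt hj)
    rw [iteratedDeriv_succ']
    simpa [sub_sub, add_comm] using ih hf.2.2 (Nat.le_of_succ_le_succ hj)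

end IsSymbol

lemma isSymbol_endWeight (m : ℕ) (p q : ℝ) : IsSymbol m p q (endWeight p q) := by
  induction m generalizing p q with
  | zero => exact isBigO_refl _ _
  | succ m ih =>
    refine ⟨isBigO_refl _ _,
      fun u hu => (hasDerivAt_endWeight hu).differentiableAt.differentiableWithinAt, ?_⟩
    have hleft := ((ih (p - 1) q).const_mul p).mono le_rfl (sub_one_lt q).le
    have hright := ((ih (p + 1) (q - 1)).const_mul (-2 * q)).mono
      (show p - 1 ≤ p + 1 by linarith) le_rfl
    exact (hleft.add hright).congr fun u hu => (hasDerivAt_endWeight hu).deriv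

end Symbol

section SymbolBoundAt

/-- The derivatives of `f` of order `j ≤ m` at `u` obey the bounds of a symbol of order `(p, q)`,
all with the constant `M`; this is the form in which parameters are tracked. -/
def SymbolBoundAt (m : ℕ) (M p q : ℝ) (f : ℝ → ℝ) (u : ℝ) : Prop :=
  ∀ j ≤ m, |iteratedDeriv j f u| ≤ M * endWeight (p - j) (q - j) u

variable {m : ℕ} {M M' p q r s u : ℝ} {f g : ℝ → ℝ}

lemma IsSymbol.exists_symbolBoundAt (hf : IsSymbol m p q f) :
    ∃ M, ∀ u ∈ Ioo (0 : ℝ) 1, SymbolBoundAt m M p q f u := by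
  have hbound (j : ℕ) (hj : j ≤ m) : ∃ C, ∀ u ∈ Ioo (0 : ℝ) 1,
      |iteratedDeriv j f u| ≤ C * |endWeight (p - j) (q - j) u| :=
    isBigO_principal.1 (hf.isBigO_iteratedDeriv hj)
  choose! C hC using hbound
  refine ⟨∑ j ∈ Finset.range (m + 1), |C j|, fun u hu j hj => (hC j hj u hu).trans ?_⟩
  rw [abs_of_pos (endWeight_pos hu)]
  have hle : |C j| ≤ ∑ i ∈ Finset.range (m + 1), |C i| :=
    Finset.single_le_sum (f := fun i => |C i|) (fun i _ => abs_nonneg _)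
      (Finset.mem_range_succ_iff.2 hj)
  exact mul_le_mul_of_nonneg_right ((le_abs_self _).trans hle) (endWeight_pos hu).le

namespace SymbolBoundAt

lemma mono (hf : SymbolBoundAt m M p q f u) (hu : u ∈ Ioo (0 : ℝ) 1) (hM : M ≤ M') :
    SymbolBoundAt m M' p q f u := fun j hj =>
  (hf j hj).trans (mul_le_mul_of_nonneg_right hM (endWeight_pos hu).le)

lemma add (hf : SymbolBoundAt m M p q f u) (hg : SymbolBoundAt m M' p q g u)
    (hfm : ContDiffAt ℝ m f u) (hgm : ContDiffAt ℝ m g u) :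
    SymbolBoundAt m (M + M') p q (fun v => f v + g v) u := by
  intro j hj
  have hjm : (j : WithTop ℕ∞) ≤ m := by exact_mod_cast hj
  rw [show (fun v => f v + g v) = f + g from rfl,
    iteratedDeriv_add (hfm.of_le hjm) (hgm.of_le hjm), add_mul]
  exact (abs_add_le _ _).trans (add_le_add (hf j hj) (hg j hj))

lemma const_mul (hf : SymbolBoundAt m M p q f u) (hu : u ∈ Ioo (0 : ℝ) 1) {a β : ℝ}
    (ha : |a| ≤ β * endWeight r s u) :
    SymbolBoundAt m (β * M) (r + p) (s + q) (fun v => a * f v) u := by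
  intro j hj
  rw [iteratedDeriv_const_mul_field, abs_mul, add_sub_assoc, add_sub_assoc, endWeight_add hu,
    mul_mul_mul_comm]
  exact mul_le_mul ha (hf j hj) (abs_nonneg _) ((abs_nonneg a).trans ha)

end SymbolBoundAt

end SymbolBoundAt

section Qop

variable {n : ℕ} {M p q u : ℝ} {Z : ℝ → ℝ}

lemma Qop_const_mul (n : ℕ) (a : ℝ) (Z : ℝ → ℝ) (u : ℝ) :
    Qop n (fun v => a * Z v) u = a ^ 2 * Qop n Z u := by
  simp only [Qop, deriv_const_mul_field']
  ring

lemma abs_Qop_le_of_abs_le {R t : ℝ} (hn : 1 ≤ n) (hu : 0 < u) (ht : 0 < t) (htu : t ≤ u)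
    (hZ₀ : |Z u| ≤ R) (hZ₁ : |deriv Z u| ≤ R / t) (hZ₂ : |deriv (deriv Z) u| ≤ R / t ^ 2) :
    |Qop n Z u| ≤ (5 / 2 + 2 * ((n : ℝ) - 1)) * (R ^ 2 / t ^ 2) := by
  have hn' : 0 ≤ (n : ℝ) - 1 := sub_nonneg.2 (by exact_mod_cast hn)
  have hR₀ : 0 ≤ R := (abs_nonneg _).trans hZ₀
  have hZu : |Z u / u| ≤ R / t := by
    rw [abs_div, abs_of_pos hu]
    exact div_le_div₀ hR₀ hZ₀ ht htu
  have hZZ₂ : |Z u * deriv (deriv Z) u| ≤ R ^ 2 / t ^ 2 := by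
    rw [abs_mul, sq R, mul_div_assoc]
    exact mul_le_mul hZ₀ hZ₂ (abs_nonneg _) hR₀
  have hZ₁Z₁ : deriv Z u ^ 2 ≤ R ^ 2 / t ^ 2 := by
    rw [← div_pow]
    exact sq_le_sq' (abs_le.1 hZ₁).1 (abs_le.1 hZ₁).2
  have hZZ₁ : |Z u / u * deriv Z u| ≤ R ^ 2 / t ^ 2 := by
    rw [abs_mul, ← div_pow, sq]
    exact mul_le_mul hZu hZ₁ (abs_nonneg _) (by positivity)
  have hZZ : (Z u / u) ^ 2 ≤ R ^ 2 / t ^ 2 := by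
    rw [← div_pow]
    exact sq_le_sq' (abs_le.1 hZu).1 (abs_le.1 hZu).2
  have hQ : Qop n Z u = Z u * deriv (deriv Z) u - 1 / 2 * deriv Z u ^ 2 - Z u / u * deriv Z u
      - 2 * ((n : ℝ) - 1) * (Z u / u) ^ 2 := by
    simp only [Qop]
    ring
  rw [hQ, abs_le]
  rw [abs_le] at hZZ₂ hZZ₁
  have hnZZ := mul_le_mul_of_nonneg_left hZZ hn'
  have hnZZ₀ := mul_nonneg hn' (sq_nonneg (Z u / u))
  have hZ₁Z₁₀ := sq_nonneg (deriv Z u)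
  constructor <;> linarith

lemma abs_Qop_le (hn : 1 ≤ n) (hu : u ∈ Ioo (0 : ℝ) 1) (hZ : SymbolBoundAt 2 M p q Z u) :
    |Qop n Z u| ≤ (5 / 2 + 2 * ((n : ℝ) - 1)) * (M ^ 2 * endWeight (2 * p - 2) (2 * q - 2) u) := by
  set R := M * endWeight p q u with hR
  set t := u * (1 - u ^ 2)
  have ht : 0 < t := mul_pos hu.1 (one_sub_sq_pos hu)
  have htu : t ≤ u := mul_le_of_le_one_right hu.1.le (sub_le_self 1 (sq_nonneg u))
  have hderiv (j : ℕ) (hj : j ≤ 2) : |iteratedDeriv j Z u| ≤ R / t ^ j := by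
    rw [hR, mul_div_assoc, ← endWeight_sub_natCast hu]
    exact hZ j hj
  have hweight : M ^ 2 * endWeight (2 * p - 2) (2 * q - 2) u = R ^ 2 / t ^ 2 := by
    have hsub := endWeight_sub_natCast (p := p + p) (q := q + q) hu 2
    rw [Nat.cast_ofNat, endWeight_add hu] at hsub
    rw [two_mul, two_mul, hsub, hR]
    ring
  rw [hweight]
  refine abs_Qop_le_of_abs_le hn hu.1 ht htu ?_ ?_ ?_
  · simpa using hderiv 0 (by norm_num)
  · simpa [iteratedDeriv_one] using hderiv 1 (by norm_num)
  · simpa [iteratedDeriv_succ] using hderiv 2 le_rfl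

end Qop

section LinearPart

/-- The operator by which the linear part `z_τ - ½(u⁻¹ - u) z_u - u⁻² z` of `Dop` acts on the
spatial factor `f` of a function `e ^ (-lam τ) f(u)`. -/
noncomputable def modeOp (lam : ℝ) (f : ℝ → ℝ) (u : ℝ) : ℝ :=
  -lam * f u - 1 / 2 * (u⁻¹ - u) * deriv f u - f u / u ^ 2

variable {lam u : ℝ} {f g : ℝ → ℝ}

lemma modeOp_const_mul (lam a : ℝ) (f : ℝ → ℝ) (u : ℝ) :
    modeOp lam (fun v => a * f v) u = a * modeOp lam f u := by
  simp only [modeOp, deriv_const_mul_field']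
  ring

lemma modeOp_endWeight (hu : u ∈ Ioo (0 : ℝ) 1) :
    modeOp lam (endWeight (-2) (1 + lam)) u = 0 := by
  have hu₀ := hu.1
  have hx := one_sub_sq_pos hu
  rw [modeOp, (hasDerivAt_endWeight hu).deriv]
  simp only [endWeight, Real.rpow_add_one hu₀.ne', Real.rpow_sub_one hu₀.ne',
    Real.rpow_sub_one hx.ne']
  field_simp
  ring

/-- `e ^ (-lam τ) f(u) + e ^ (-2 lam τ) g(u)`, the shape of both barriers. -/
noncomputable def twoMode (lam : ℝ) (f g : ℝ → ℝ) (u τ : ℝ) : ℝ :=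
  Real.exp (-lam * τ) * f u + Real.exp (-lam * τ) ^ 2 * g u

lemma Dop_twoMode (n : ℕ) (τ : ℝ) (hf : DifferentiableAt ℝ f u) (hg : DifferentiableAt ℝ g u) :
    Dop n (twoMode lam f g) u τ =
      Real.exp (-lam * τ) * modeOp lam f u + Real.exp (-lam * τ) ^ 2 * (modeOp (2 * lam) g u
        - Qop n (fun v => f v + Real.exp (-lam * τ) * g v) u / (2 * ((n : ℝ) - 1))) := by
  have hexp : HasDerivAt (fun t => Real.exp (-lam * t)) (-lam * Real.exp (-lam * τ)) τ := by
    simpa [mul_comm] using ((hasDerivAt_id τ).const_mul (-lam)).exp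
  have htime : HasDerivAt (twoMode lam f g u) (-lam * Real.exp (-lam * τ) * f u
      + 2 * Real.exp (-lam * τ) * (-lam * Real.exp (-lam * τ)) * g u) τ := by
    refine ((hexp.mul_const (f u)).add ((hexp.pow 2).mul_const (g u))).congr_deriv ?_
    norm_num
  set E := Real.exp (-lam * τ)
  have hslice : (fun v => twoMode lam f g v τ) = fun v => E * (f v + E * g v) := by
    ext v
    rw [twoMode]
    ring
  have hspace : deriv (fun v => twoMode lam f g v τ) u = E * (deriv f u + E * deriv g u) := by
    rw [hslice, deriv_const_mul_field, deriv_fun_add hf (hg.const_mul E), deriv_const_mul_field]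
  rw [Dop, htime.deriv, hspace, hslice, Qop_const_mul, congrFun hslice u]
  simp only [modeOp]
  ring

end LinearPart

section Correction

variable {lam u : ℝ} {ζ : ℝ → ℝ}

/-- An antiderivative of `-2 u⁻³ (1 - u ^ 2)⁻²`, the derivative of the quotient of the correction
`ζ` by the homogeneous solution `u⁻² (1 - u ^ 2) ^ (1 + lam)`. -/
noncomputable def sourceIntegral (u : ℝ) : ℝ :=
  1 / u ^ 2 - 1 / (1 - u ^ 2) - 2 * (2 * Real.log u - Real.log (1 - u ^ 2))

lemma hasDerivAt_sourceIntegral (hu : u ∈ Ioo (0 : ℝ) 1) :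
    HasDerivAt sourceIntegral (-2 * endWeight (-3) (-2) u) u := by
  have hu₀ := hu.1
  have hx := one_sub_sq_pos hu
  have hx' : HasDerivAt (fun v : ℝ => 1 - v ^ 2) (-(2 * u)) u := by
    simpa using (hasDerivAt_pow 2 u).const_sub 1
  have hinv_sq : HasDerivAt (fun v : ℝ => 1 / v ^ 2) (-(2 * u) / (u ^ 2) ^ 2) u := by
    simpa using (hasDerivAt_pow 2 u).fun_inv (pow_ne_zero 2 hu₀.ne')
  have hinv_x : HasDerivAt (fun v : ℝ => 1 / (1 - v ^ 2)) (2 * u / (1 - u ^ 2) ^ 2) u := by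
    simpa using hx'.fun_inv hx.ne'
  have hlog := ((Real.hasDerivAt_log hu₀.ne').const_mul 2).sub (hx'.log hx.ne')
  refine ((hinv_sq.sub hinv_x).sub (hlog.const_mul 2)).congr_deriv ?_
  rw [show endWeight (-3) (-2) u = u ^ (-3 : ℤ) * (1 - u ^ 2) ^ (-2 : ℤ) from
    mod_cast endWeight_intCast (-3) (-2) u]
  field_simp
  ring

lemma isBigO_sourceIntegral :
    sourceIntegral =O[𝓟 (Ioo 0 1)] endWeight (-2) (-1) := by
  refine isBigO_principal.2 ⟨3, fun u hu => ?_⟩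
  have hu₀ := hu.1
  have hx := one_sub_sq_pos hu
  have hweight : endWeight (-2) (-1) u = 1 / u ^ 2 + 1 / (1 - u ^ 2) := by
    rw [show endWeight (-2) (-1) u = u ^ (-2 : ℤ) * (1 - u ^ 2) ^ (-1 : ℤ) from
      mod_cast endWeight_intCast (-2) (-1) u]
    field_simp
    ring
  have hlog {y : ℝ} (hy₀ : 0 < y) (hy₁ : y ≤ 1) : |Real.log y| ≤ 1 / y := by
    have hle := Real.log_le_sub_one_of_pos (one_div_pos.2 hy₀)
    rw [one_div, Real.log_inv] at hle
    rw [abs_of_nonpos (Real.log_nonpos hy₀.le hy₁), one_div]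
    linarith
  have hlog_sq := hlog (pow_pos hu₀ 2) (pow_le_one₀ hu₀.le hu.2.le)
  rw [Real.log_pow, Nat.cast_ofNat] at hlog_sq
  have hlog_x := hlog hx (sub_le_self 1 (sq_nonneg u))
  have hinv_sq := one_div_pos.2 (pow_pos hu₀ 2)
  have hinv_x := one_div_pos.2 hx
  rw [Real.norm_eq_abs, Real.norm_of_nonneg (endWeight_pos hu).le, hweight, sourceIntegral]
  rw [abs_le] at hlog_sq hlog_x ⊢
  constructor <;> linarith

lemma isSymbol_sourceIntegral (m : ℕ) : IsSymbol m (-2) (-1) sourceIntegral := by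
  cases m with
  | zero => exact isBigO_sourceIntegral
  | succ m =>
    refine ⟨isBigO_sourceIntegral,
      fun u hu => (hasDerivAt_sourceIntegral hu).differentiableAt.differentiableWithinAt, ?_⟩
    have hderiv := (isSymbol_endWeight m (-3) (-2)).const_mul (-2)
    norm_num1
    exact hderiv.congr fun u hu => (hasDerivAt_sourceIntegral hu).deriv

lemma hasDerivAt_div_endWeight (hu : u ∈ Ioo (0 : ℝ) 1) (hζ : DifferentiableAt ℝ ζ u)
    (hode : modeOp lam ζ u = endWeight (-6) lam u) :
    HasDerivAt (fun v => ζ v / endWeight (-2) (1 + lam) v) (-2 * endWeight (-3) (-2) u) u := by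
  have hu₀ := hu.1
  have hx := one_sub_sq_pos hu
  have hh₀ : endWeight (-2) (1 + lam) u ≠ 0 := (endWeight_pos hu).ne'
  have hh : DifferentiableAt ℝ (endWeight (-2) (1 + lam)) u :=
    (hasDerivAt_endWeight hu).differentiableAt
  refine (hζ.hasDerivAt.div hh.hasDerivAt hh₀).congr_deriv ?_
  have hhom := modeOp_endWeight (lam := lam) hu
  have hsource : endWeight (-6) lam u =
      endWeight (-3) (-2) u * (endWeight (-2) (1 + lam) u * endWeight (-1) 1 u) := by
    rw [← endWeight_add hu, ← endWeight_add hu]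
    norm_num
    ring_nf
  have hcoeff : endWeight (-1) 1 u = u⁻¹ - u := by
    rw [endWeight, Real.rpow_neg_one, Real.rpow_one]
    field_simp
  have hcoeff₀ : u⁻¹ - u ≠ 0 := hcoeff ▸ (endWeight_pos hu).ne'
  rw [hsource, hcoeff] at hode
  simp only [modeOp] at hode hhom
  rw [div_eq_iff (pow_ne_zero 2 hh₀)]
  apply mul_left_cancel₀ hcoeff₀
  linear_combination -2 * endWeight (-2) (1 + lam) u * hode + 2 * ζ u * hhom

lemma isSymbol_of_modeOp_eq (hζ : DifferentiableOn ℝ ζ (Ioo 0 1))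
    (hode : ∀ u ∈ Ioo (0 : ℝ) 1, modeOp lam ζ u = endWeight (-6) lam u) (m : ℕ) :
    IsSymbol m (-4) lam ζ := by
  have hquot (u : ℝ) (hu : u ∈ Ioo (0 : ℝ) 1) := hasDerivAt_div_endWeight hu
    (hζ.differentiableAt (isOpen_Ioo.mem_nhds hu)) (hode u hu)
  obtain ⟨K, hK⟩ := isOpen_Ioo.exists_eq_add_of_deriv_eq isPreconnected_Ioo
    (fun u hu => (hquot u hu).differentiableAt.differentiableWithinAt)
    (fun u hu => (hasDerivAt_sourceIntegral hu).differentiableAt.differentiableWithinAt)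
    fun u hu => (hquot u hu).deriv.trans (hasDerivAt_sourceIntegral hu).deriv.symm
  have hconst : IsSymbol m (-2) (-1) fun u => K * endWeight 0 0 u :=
    ((isSymbol_endWeight m 0 0).const_mul K).mono (by norm_num) (by norm_num)
  have hprod := (isSymbol_endWeight m (-2) (1 + lam)).mul
    ((isSymbol_sourceIntegral m).add hconst)
  rw [show (-2 : ℝ) + -2 = -4 by norm_num, add_neg_cancel_comm] at hprod
  refine hprod.congr fun u hu => ?_
  have hKu : ζ u / endWeight (-2) (1 + lam) u = sourceIntegral u + K := hK hu
  dsimp only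
  rw [endWeight_zero_zero, mul_one, ← hKu, mul_div_cancel₀ _ (endWeight_pos hu).ne']

end Correction

section Barrier

variable {n : ℕ} {lam : ℝ} {ζ : ℝ → ℝ}

lemma SymbolBoundAt.leading_add_correction {M N a b E β u : ℝ}
    (hφ : SymbolBoundAt 2 M (-2) (1 + lam) (endWeight (-2) (1 + lam)) u)
    (hu : u ∈ Ioo (0 : ℝ) 1) (hζ : SymbolBoundAt 2 N (-4) (2 * lam) ζ u)
    (hζu : ContDiffAt ℝ 2 ζ u)
    (hb : |E * b| ≤ β * endWeight 2 (1 - lam) u) :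
    SymbolBoundAt 2 (|a| * M + β * N) (-2) (1 + lam)
      (fun v => a * endWeight (-2) (1 + lam) v + E * (b * ζ v)) u := by
  have hlead : SymbolBoundAt 2 (|a| * M) (-2) (1 + lam)
      (fun v => a * endWeight (-2) (1 + lam) v) u := by
    have hscale := hφ.const_mul hu (a := a) (r := 0) (s := 0) (β := |a|)
      (by rw [endWeight_zero_zero, mul_one])
    rwa [zero_add, zero_add] at hscale
  have hcorr : SymbolBoundAt 2 (β * N) (-2) (1 + lam) (fun v => E * (b * ζ v)) u := by
    have hscale := hζ.const_mul hu hb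
    rw [show (2 : ℝ) + -4 = -2 by norm_num, show 1 - lam + 2 * lam = 1 + lam by ring] at hscale
    simpa only [mul_assoc] using hscale
  have hφu : ContDiffAt ℝ 2 (endWeight (-2) (1 + lam)) u :=
    (isSymbol_endWeight 3 _ _).contDiffOn.contDiffAt (isOpen_Ioo.mem_nhds hu)
  exact hlead.add hcorr (contDiffAt_const.mul hφu) (contDiffAt_const.mul (contDiffAt_const.mul hζu))

lemma Dop_twoMode_sub {a b τ u : ℝ} (hu : u ∈ Ioo (0 : ℝ) 1) (hζ : DifferentiableAt ℝ ζ u)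
    (hode : modeOp (2 * lam) ζ u = endWeight (-6) (2 * lam) u) :
    Dop n (twoMode lam (fun v => a * endWeight (-2) (1 + lam) v) fun v => b * ζ v) u τ
        - Real.exp (-lam * τ) ^ 2 * (b * endWeight (-6) (2 * lam) u) =
      -(Real.exp (-lam * τ) ^ 2 * (Qop n (fun v => a * endWeight (-2) (1 + lam) v
        + Real.exp (-lam * τ) * (b * ζ v)) u / (2 * ((n : ℝ) - 1)))) := by
  rw [Dop_twoMode n τ ((hasDerivAt_endWeight hu).differentiableAt.const_mul a) (hζ.const_mul b),
    modeOp_const_mul, modeOp_const_mul, modeOp_endWeight hu, hode]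
  ring

lemma exists_abs_Dop_twoMode_sub_le (hn : 2 ≤ n) (hζ : IsSymbol 3 (-4) (2 * lam) ζ)
    (hode : ∀ u ∈ Ioo (0 : ℝ) 1, modeOp (2 * lam) ζ u = endWeight (-6) (2 * lam) u) :
    ∃ C, ∀ u ∈ Ioo (0 : ℝ) 1, ∀ a b β τ : ℝ,
      |Real.exp (-lam * τ) * b| ≤ β * endWeight 2 (1 - lam) u →
      |Dop n (twoMode lam (fun v => a * endWeight (-2) (1 + lam) v) fun v => b * ζ v) u τ
          - Real.exp (-lam * τ) ^ 2 * (b * endWeight (-6) (2 * lam) u)| ≤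
        Real.exp (-lam * τ) ^ 2 * (C * (|a| + β) ^ 2 * endWeight (-6) (2 * lam) u) := by
  obtain ⟨Cφ, hCφ⟩ := (isSymbol_endWeight 2 (-2) (1 + lam)).exists_symbolBoundAt
  obtain ⟨Cζ, hCζ⟩ := hζ.of_succ.exists_symbolBoundAt
  have hN : 0 < 2 * ((n : ℝ) - 1) :=
    mul_pos two_pos (sub_pos.2 (Nat.one_lt_cast.2 (Nat.lt_of_succ_le hn)))
  refine ⟨(5 / 2 + 2 * ((n : ℝ) - 1)) * max Cφ Cζ ^ 2 / (2 * ((n : ℝ) - 1)),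
    fun u hu a b β τ hb => ?_⟩
  have hβ : 0 ≤ β := nonneg_of_mul_nonneg_left ((abs_nonneg _).trans hb) (endWeight_pos hu)
  have hζu : ContDiffAt ℝ 2 ζ u := hζ.contDiffOn.contDiffAt (isOpen_Ioo.mem_nhds hu)
  have hconst : |a| * Cφ + β * Cζ ≤ max Cφ Cζ * (|a| + β) := by
    rw [mul_add, mul_comm _ |a|, mul_comm _ β]
    gcongr
    exacts [le_max_left _ _, le_max_right _ _]
  have hQ := abs_Qop_le (one_le_two.trans hn) hu
    (((hCφ u hu).leading_add_correction hu (hCζ u hu) hζu hb).mono hu hconst)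
  rw [show (2 : ℝ) * -2 - 2 = -6 by norm_num, show 2 * (1 + lam) - 2 = 2 * lam by ring] at hQ
  rw [Dop_twoMode_sub hu (hζu.differentiableAt two_ne_zero) (hode u hu), abs_neg, abs_mul,
    abs_of_nonneg (sq_nonneg (Real.exp (-lam * τ))), abs_div, abs_of_pos hN]
  refine mul_le_mul_of_nonneg_left ((div_le_div_of_nonneg_right hQ hN.le).trans_eq ?_)
    (sq_nonneg _)
  ring

lemma exists_abs_mul_lt_endWeight (hζ : IsSymbol 0 (-4) (2 * lam) ζ) {ε : ℝ} (hε : 0 < ε) :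
    ∃ β, 0 < β ∧ ∀ u ∈ Ioo (0 : ℝ) 1, ∀ b : ℝ, |b| ≤ β * endWeight 2 (1 - lam) u →
      |b * ζ u| < ε * endWeight (-2) (1 + lam) u := by
  obtain ⟨C, hC₀, hC⟩ := hζ.isBigO.exists_pos
  refine ⟨ε / (2 * C), by positivity, fun u hu b hb => ?_⟩
  have hζu : |ζ u| ≤ C * endWeight (-4) (2 * lam) u := by
    simpa [abs_of_pos (endWeight_pos hu)] using (eventually_principal.1 hC.bound) u hu
  have hweight : endWeight (-2) (1 + lam) u =
      endWeight 2 (1 - lam) u * endWeight (-4) (2 * lam) u := by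
    rw [← endWeight_add hu]
    ring_nf
  calc |b * ζ u| ≤ ε / (2 * C) * endWeight 2 (1 - lam) u * (C * endWeight (-4) (2 * lam) u) := by
        rw [abs_mul]
        exact mul_le_mul hb hζu (abs_nonneg _) ((abs_nonneg b).trans hb)
    _ = ε / 2 * endWeight (-2) (1 + lam) u := by
        rw [hweight]
        field_simp
    _ < ε * endWeight (-2) (1 + lam) u :=
        mul_lt_mul_of_pos_right (half_lt_self hε) (endWeight_pos hu)

/-- The barrier `zIntPM` in terms of `lam = 2 γ_k` and an arbitrary leading coefficient `c`. -/
noncomputable def barrier (lam c δ A : ℝ) (ζ : ℝ → ℝ) (s : ℝ) : ℝ → ℝ → ℝ :=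
  twoMode lam (fun u => (1 + s * δ) * c * endWeight (-2) (1 + lam) u) fun u => s * A * ζ u

lemma zIntPM_eq_barrier (n k : ℕ) (bk δ A : ℝ) (ζ : ℝ → ℝ) (s : ℝ) :
    zIntPM n k bk δ A ζ s = barrier (2 * gam k) (ck n k bk) δ A ζ s := by
  ext u τ
  have hexp : Real.exp (-4 * gam k * τ) = Real.exp (-2 * gam k * τ) ^ 2 := by
    rw [← Real.exp_nat_mul]
    push_cast
    ring_nf
  rw [zIntPM, barrier, twoMode, endWeight, hexp, neg_mul_eq_neg_mul 2 (gam k)]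
  ring

lemma exists_abs_Dop_barrier_sub_le (hn : 2 ≤ n) (hζ : IsSymbol 3 (-4) (2 * lam) ζ)
    (hode : ∀ u ∈ Ioo (0 : ℝ) 1, modeOp (2 * lam) ζ u = endWeight (-6) (2 * lam) u)
    {c δ β : ℝ} (hc : 0 ≤ c) (hδ : 0 ≤ δ) (hβ : 0 ≤ β) :
    ∃ A, 0 < A ∧ ∀ s : ℝ, |s| = 1 → ∀ u ∈ Ioo (0 : ℝ) 1, ∀ τ : ℝ,
      A * Real.exp (-lam * τ) ≤ β * endWeight 2 (1 - lam) u →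
      |Dop n (barrier lam c δ A ζ s) u τ
          - s * (Real.exp (-lam * τ) ^ 2 * (A * endWeight (-6) (2 * lam) u))| ≤
        Real.exp (-lam * τ) ^ 2 * (A * endWeight (-6) (2 * lam) u) := by
  obtain ⟨C, hC⟩ := exists_abs_Dop_twoMode_sub_le hn hζ hode
  -- `C` does not depend on the coefficient of `ζ`, so `A` can dominate the quadratic error.
  set A := max 1 (|C| * ((1 + δ) * c + β) ^ 2)
  have hA : 0 < A := lt_max_of_lt_left one_pos
  refine ⟨A, hA, fun s hs u hu τ hregion => ?_⟩
  have hE := Real.exp_pos (-lam * τ)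
  have hw : 0 < endWeight (-6) (2 * lam) u := endWeight_pos hu
  have hcoeff : |(1 + s * δ) * c| ≤ (1 + δ) * c := by
    rw [abs_mul, abs_of_nonneg hc]
    refine mul_le_mul_of_nonneg_right ((abs_add_le _ _).trans_eq ?_) hc
    rw [abs_mul, hs, abs_one, one_mul, abs_of_nonneg hδ]
  have hb : |Real.exp (-lam * τ) * (s * A)| ≤ β * endWeight 2 (1 - lam) u := by
    rwa [abs_mul, abs_mul, hs, one_mul, abs_of_pos hE, abs_of_pos hA, mul_comm]
  have hCA : C * (|(1 + s * δ) * c| + β) ^ 2 ≤ A := by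
    refine le_max_of_le_right ?_
    gcongr
    exact le_abs_self C
  calc _ = |Dop n (barrier lam c δ A ζ s) u τ
        - Real.exp (-lam * τ) ^ 2 * (s * A * endWeight (-6) (2 * lam) u)| := by ring_nf
    _ ≤ _ := hC u hu _ _ β τ hb
    _ ≤ _ := by gcongr

theorem exists_forall_barrier (hn : 2 ≤ n) (hζ : DifferentiableOn ℝ ζ (Ioo 0 1))
    (hode : ∀ u ∈ Ioo (0 : ℝ) 1, modeOp (2 * lam) ζ u = endWeight (-6) (2 * lam) u)
    {c δ : ℝ} (hc : 0 < c) (hδ : 0 < δ) :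
    ∃ A β : ℝ, 0 < A ∧ 0 < β ∧ ∀ u ∈ Ioo (0 : ℝ) 1, ∀ τ : ℝ,
      A * Real.exp (-lam * τ) ≤ β * endWeight 2 (1 - lam) u →
      0 ≤ Dop n (barrier lam c δ A ζ 1) u τ ∧ Dop n (barrier lam c δ A ζ (-1)) u τ ≤ 0 ∧
        barrier lam c δ A ζ (-1) u τ < barrier lam c δ A ζ 1 u τ := by
  have hsymbol := isSymbol_of_modeOp_eq hζ hode
  obtain ⟨β, hβ, hlt⟩ := exists_abs_mul_lt_endWeight (hsymbol 0) (mul_pos hδ hc)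
  obtain ⟨A, hA, herror⟩ := exists_abs_Dop_barrier_sub_le hn (hsymbol 3) hode hc.le hδ.le hβ.le
  refine ⟨A, β, hA, hβ, fun u hu τ hregion => ⟨?_, ?_, ?_⟩⟩
  · linarith [(abs_le.1 (herror 1 abs_one u hu τ hregion)).1]
  · linarith [(abs_le.1 (herror (-1) (by rw [abs_neg, abs_one]) u hu τ hregion)).2]
  · have hE := Real.exp_pos (-lam * τ)
    have hζu := hlt u hu (A * Real.exp (-lam * τ)) (by rwa [abs_of_pos (mul_pos hA hE)])
    have hgap := mul_pos hE (neg_lt_iff_pos_add.1 (abs_lt.1 hζu).1)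
    simp only [barrier, twoMode]
    linarith

end Barrier

section Region

variable {T m u : ℝ}

lemma mem_Ioo_of_sqrt_le_of_le_one_sub_rpow (hT : 0 < T) (hleft : √T ≤ u) (hright : u ≤ 1 - T ^ m) :
    u ∈ Ioo (0 : ℝ) 1 :=
  ⟨(Real.sqrt_pos.2 hT).trans_le hleft,
    hright.trans_lt (sub_lt_self 1 (Real.rpow_pos_of_pos hT m))⟩

lemma le_four_mul_endWeight (hm : 1 / 2 ≤ m) (hT : 0 < T) (hleft : √T ≤ u)
    (hright : u ≤ 1 - T ^ m) : T ≤ 4 * endWeight 2 (1 / m) u := by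
  obtain ⟨hu₀, hu₁⟩ := mem_Ioo_of_sqrt_le_of_le_one_sub_rpow hT hleft hright
  have hm₀ : 0 < m := by linarith
  have hTu : T ≤ u ^ 2 := (Real.sqrt_le_left hu₀.le).1 hleft
  have husq : u ^ 2 ≤ u := by nlinarith
  have hTx : T ≤ (1 - u ^ 2) ^ (1 / m) := by
    rw [one_div, Real.le_rpow_inv_iff_of_pos hT.le (by linarith) hm₀]
    linarith
  rw [endWeight, Real.rpow_two]
  rcases le_total (1 / 4) (u ^ 2) with hu | hu
  · nlinarith
  · have hquarter : 1 / 4 ≤ (1 - u ^ 2) ^ (1 / m) := by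
      calc (1 / 4 : ℝ) = (1 / 2) ^ (2 : ℝ) := by norm_num
        _ ≤ (1 / 2) ^ (1 / m) := Real.rpow_le_rpow_of_exponent_ge (by norm_num) (by norm_num)
            (by rw [div_le_iff₀ hm₀]; linarith)
        _ ≤ (1 - u ^ 2) ^ (1 / m) :=
            Real.rpow_le_rpow (by norm_num) (by linarith) (by positivity)
    nlinarith [sq_nonneg u]

end Region

section Main

lemma ck_pos {n k : ℕ} {bk : ℝ} (hn : 2 ≤ n) (hk : 0 < k) (hbk : bk < 0) : 0 < ck n k bk := by
  have hn' : 0 < (n : ℝ) - 1 := sub_pos.2 (by exact_mod_cast hn)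
  have hbk' : 0 < (-bk) ^ ((2 : ℝ) / k) := Real.rpow_pos_of_pos (neg_pos.2 hbk) _
  unfold ck
  positivity

lemma sqrt_mul_sqrt_mul_exp (k : ℕ) {K r : ℝ} (hK : 0 ≤ K) (hr : 0 ≤ r) (τ : ℝ) :
    √K * √r * Real.exp (-gam k * τ) = √(K * r * Real.exp (-(2 * gam k) * τ)) := by
  rw [Real.sqrt_mul (mul_nonneg hK hr), Real.sqrt_mul hK, ← Real.exp_half]
  ring_nf

lemma rpow_mul_rpow_mul_exp {k : ℕ} (hk : 0 < k) {K r : ℝ} (hK : 0 ≤ K) (hr : 0 ≤ r) (τ : ℝ) :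
    K ^ ((k : ℝ) / 2) * r ^ ((k : ℝ) / 2) * Real.exp (-mu k * τ) =
      (K * r * Real.exp (-(2 * gam k) * τ)) ^ ((k : ℝ) / 2) := by
  have hk' : (k : ℝ) ≠ 0 := by positivity
  rw [Real.mul_rpow (mul_nonneg hK hr) (Real.exp_pos _).le, Real.mul_rpow hK hr, ← Real.exp_mul]
  congr 2
  rw [mu, gam]
  field_simp

lemma modeOp_eq_of_hasDerivAt {k : ℕ} {ζ ζ' : ℝ → ℝ} {u : ℝ} (hu : 0 ≤ u)
    (hderiv : HasDerivAt ζ (ζ' u) u)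
    (hode : -(1 / 2) * (u⁻¹ - u) * ζ' u - (4 * gam k + u ^ (-2 : ℝ)) * ζ u
      = u ^ (-6 : ℝ) * (1 - u ^ 2) ^ (4 * gam k)) :
    modeOp (2 * (2 * gam k)) ζ u = endWeight (-6) (2 * (2 * gam k)) u := by
  rw [Real.rpow_neg hu 2, Real.rpow_two] at hode
  rw [modeOp, hderiv.deriv, endWeight, show 2 * (2 * gam k) = 4 * gam k by ring, ← hode]
  ring

lemma mul_exp_le_endWeight {k : ℕ} (hk : 0 < k) {c A β K u τ : ℝ} (hc : 0 < c) (hA : 0 < A)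
    (hK : 0 < K) (hβK : 2 * c ≤ β * K)
    (hleft : √(K * (2 * A / c) * Real.exp (-(2 * gam k) * τ)) ≤ u)
    (hright : u ≤ 1 - (K * (2 * A / c) * Real.exp (-(2 * gam k) * τ)) ^ ((k : ℝ) / 2)) :
    A * Real.exp (-(2 * gam k) * τ) ≤ β * endWeight 2 (1 - 2 * gam k) u := by
  have hk' : (1 : ℝ) ≤ k := by exact_mod_cast hk
  have hT : 0 < K * (2 * A / c) * Real.exp (-(2 * gam k) * τ) := by positivity
  have hexponent : 1 / ((k : ℝ) / 2) = 1 - 2 * gam k := by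
    rw [gam]
    field_simp
    ring
  have hregion := le_four_mul_endWeight (by linarith) hT hleft hright
  rw [hexponent] at hregion
  have hw : 0 < endWeight 2 (1 - 2 * gam k) u :=
    endWeight_pos (mem_Ioo_of_sqrt_le_of_le_one_sub_rpow hT hleft hright)
  refine le_of_mul_le_mul_left ?_ hK
  calc K * (A * Real.exp (-(2 * gam k) * τ))
      = c / 2 * (K * (2 * A / c) * Real.exp (-(2 * gam k) * τ)) := by field_simp
    _ ≤ c / 2 * (4 * endWeight 2 (1 - 2 * gam k) u) := by gcongr
    _ = 2 * c * endWeight 2 (1 - 2 * gam k) u := by ring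
    _ ≤ β * K * endWeight 2 (1 - 2 * gam k) u := by gcongr
    _ = K * (β * endWeight 2 (1 - 2 * gam k) u) := by ring

theorem stmt3_general (n k : ℕ) (hn : 2 ≤ n) (hk : 0 < k) (bk : ℝ) (hbk : bk < 0)
    (δ : ℝ) (hδ : 0 < δ) (ζ ζ' : ℝ → ℝ)
    (hderiv : ∀ u ∈ Ioo (0 : ℝ) 1, HasDerivAt ζ (ζ' u) u)
    (hode : ∀ u ∈ Ioo (0 : ℝ) 1,
      -(1 / 2) * (u⁻¹ - u) * ζ' u - (4 * gam k + u ^ (-2 : ℝ)) * ζ u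
        = u ^ (-6 : ℝ) * (1 - u ^ 2) ^ (4 * gam k)) :
    ∃ A₃ B₂ B₃ : ℝ, 0 < A₃ ∧ 0 < B₂ ∧ B₂ ≤ B₃ ∧ ∀ u τ : ℝ,
      B₂ * √(2 * A₃ / ck n k bk) * Real.exp (-gam k * τ) ≤ u →
      u ≤ 1 - B₃ * (2 * A₃ / ck n k bk) ^ ((k : ℝ) / 2) * Real.exp (-mu k * τ) →
      0 ≤ Dop n (zIntPM n k bk δ A₃ ζ 1) u τ ∧
      Dop n (zIntPM n k bk δ A₃ ζ (-1)) u τ ≤ 0 ∧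
      zIntPM n k bk δ A₃ ζ (-1) u τ < zIntPM n k bk δ A₃ ζ 1 u τ := by
  have hc := ck_pos hn hk hbk
  set c := ck n k bk
  obtain ⟨A, β, hA, hβ, hbarrier⟩ := exists_forall_barrier hn
    (fun u hu => (hderiv u hu).differentiableAt.differentiableWithinAt)
    (fun u hu => modeOp_eq_of_hasDerivAt hu.1.le (hderiv u hu) (hode u hu)) hc hδ
  set K := max 1 (2 * c / β)
  have hK : 1 ≤ K := le_max_left _ _
  have hK₀ : 0 < K := one_pos.trans_le hK
  have hβK : 2 * c ≤ β * K := (div_le_iff₀' hβ).1 (le_max_right _ _)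
  have hk' : (1 : ℝ) ≤ k := by exact_mod_cast hk
  refine ⟨A, √K, K ^ ((k : ℝ) / 2), hA, Real.sqrt_pos.2 hK₀, ?_, fun u τ hleft hright => ?_⟩
  · rw [Real.sqrt_eq_rpow]
    exact Real.rpow_le_rpow_of_exponent_le hK (by linarith)
  rw [sqrt_mul_sqrt_mul_exp k hK₀.le (by positivity)] at hleft
  rw [rpow_mul_rpow_mul_exp hk hK₀.le (by positivity)] at hright
  have hu := mem_Ioo_of_sqrt_le_of_le_one_sub_rpow (by positivity) hleft hright
  simp only [zIntPM_eq_barrier]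
  exact hbarrier u hu τ (mul_exp_le_endWeight hk hc hA hK₀ hβK hleft hright)

end Main

/-- properly ordered barriers in the intermediate region. -/
theorem stmt3 (n k : ℕ) (hn : 2 ≤ n) (hk : 3 ≤ k) (bk : ℝ) (hbk : bk < 0)
    (δ : ℝ) (hδ : δ ∈ Set.Ioo (0:ℝ) (1/2)) (ζ ζ' : ℝ → ℝ)
    (hderiv : ∀ u ∈ Set.Ioo (0:ℝ) 1, HasDerivAt ζ (ζ' u) u)
    (hode : ∀ u ∈ Set.Ioo (0:ℝ) 1,
      -(1/2) * (u⁻¹ - u) * ζ' u - (4 * gam k + u ^ (-2:ℝ)) * ζ u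
        = u ^ (-6:ℝ) * (1 - u^2) ^ (4 * gam k))
    (hz0 : (fun u => ζ u - u ^ (-4:ℝ)) =O[𝓝[>] (0:ℝ)]
        fun u => u ^ (-2:ℝ) * Real.log (1/u))
    (hz1 : (fun u => ζ u + (1 - u^2) ^ (4 * gam k)) =O[𝓝[<] (1:ℝ)]
        fun u => (1 - u^2) ^ (4 * gam k + 1) * |Real.log (1 - u^2)|) :
    ∃ A₃ B₂ B₃ τ₃ : ℝ, 0 < A₃ ∧ 0 < B₂ ∧ B₂ ≤ B₃ ∧
      ∀ u τ : ℝ, τ₃ ≤ τ →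
        B₂ * Real.sqrt (2 * A₃ / ck n k bk) * Real.exp (-gam k * τ) ≤ u →
        u ≤ 1 - B₃ * (2 * A₃ / ck n k bk) ^ ((k:ℝ)/2) * Real.exp (-mu k * τ) →
        0 ≤ Dop n (zIntPM n k bk δ A₃ ζ 1) u τ ∧
        Dop n (zIntPM n k bk δ A₃ ζ (-1)) u τ ≤ 0 ∧
        zIntPM n k bk δ A₃ ζ (-1) u τ < zIntPM n k bk δ A₃ ζ 1 u τ := by
  obtain ⟨A₃, B₂, B₃, hA₃, hB₂, hB, hbarrier⟩ :=
    stmt3_general n k hn (by lia) bk hbk δ hδ.1 ζ ζ' hderiv hode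
  exact ⟨A₃, B₂, B₃, 0, hA₃, hB₂, hB, fun u τ _ => hbarrier u τ⟩
end

section
/- Fix integers n ≥ 2 and k ≥ 3, a constant A₄ > 0, set Â := 1/k + 1, let 𝔅 be a Bryant soliton profile, and put B̂(r) := 𝔅(A₄ r). Consider the linear inhomogeneous ODE B̂(r) β″(r) + ((n−1)/r − B̂′(r) − B̂(r)/r) β′(r) + (B̂″(r) − B̂′(r)/r + 2(n−1)(1 − 2B̂(r))/r²) β(r) = 2(n−1) Â r B̂′(r) on (0,∞). Then: (i) there exists a solution β_p with β_p(r) = r² + o(r²) as r ↘ 0; and (ii) every solution β of this ODE satisfies β(r) → −2Â/A₄² as r → ∞. -/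
open Topology Filter Asymptotics Set

/-- The elliptic operator
`E_r[z] = z z'' - (1/2)(z')² + (n-1-z)z'/r + 2(n-1)(1-z)z/r²`. -/
noncomputable def Eop (n : ℕ) (z : ℝ → ℝ) (r : ℝ) : ℝ :=
  z r * deriv (deriv z) r - (1/2) * (deriv z r)^2
    + ((n:ℝ) - 1 - z r) * deriv z r / r
    + 2 * ((n:ℝ) - 1) * (1 - z r) * z r / r^2

/-- A Bryant soliton profile. -/
structure BryantProfile (n : ℕ) where
  toFun : ℝ → ℝ
  b : ℝ
  b2 : ℝ
  ctilde : ℝ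
  smooth : ContDiffOn ℝ (⊤ : ℕ∞) toFun (Set.Ici 0)
  mem_Ioc : ∀ r : ℝ, 0 ≤ r → toFun r ∈ Set.Ioc (0:ℝ) 1
  val_zero : toFun 0 = 1
  deriv_zero : deriv toFun 0 = 0
  deriv_neg : ∀ r : ℝ, 0 < r → deriv toFun r < 0
  soliton : ∀ r : ℝ, 0 < r → Eop n toFun r = 0
  b_pos : 0 < b
  expand_zero : (fun ρ => toFun ρ - (1 - b * ρ^2)) =O[𝓝[>] (0:ℝ)] fun ρ => ρ^4
  expand_zero_deriv :
    (fun ρ => deriv toFun ρ + 2 * b * ρ) =O[𝓝[>] (0:ℝ)] fun ρ => ρ^3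
  expand_top :
    (fun ρ => toFun ρ - (ρ ^ (-2:ℝ) + b2 * ρ ^ (-4:ℝ))) =O[atTop] fun ρ => ρ ^ (-6:ℝ)
  expand_top_deriv :
    (fun ρ => deriv toFun ρ - (-2 * ρ ^ (-3:ℝ) - 4 * b2 * ρ ^ (-5:ℝ)))
      =O[atTop] fun ρ => ρ ^ (-7:ℝ)
  ctilde_pos : 0 < ctilde
  deriv_lower : ∀ r : ℝ, 0 < r → ctilde * min (r^2) (r ^ (-2:ℝ)) ≤ -(r * deriv toFun r)

/-- `β`, with first and second derivatives `β'`, `β''`, solves the linear inhomogeneous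
ODE `B̂ β'' + ((n-1)/r - B̂' - B̂/r) β' + (B̂'' - B̂'/r + 2(n-1)(1-2B̂)/r²) β = 2(n-1) Â r B̂'`
on `(0,∞)`, where `B̂(r) = 𝔅(A₄ r)`. -/
def IsBetaSol (n : ℕ) (Ahat : ℝ) (Bhat : ℝ → ℝ) (β β' β'' : ℝ → ℝ) : Prop :=
  (∀ r : ℝ, 0 < r → HasDerivAt β (β' r) r) ∧
  (∀ r : ℝ, 0 < r → HasDerivAt β' (β'' r) r) ∧
  ∀ r : ℝ, 0 < r →
    Bhat r * β'' r
      + (((n:ℝ) - 1)/r - deriv Bhat r - Bhat r / r) * β' r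
      + (deriv (deriv Bhat) r - deriv Bhat r / r
          + 2 * ((n:ℝ) - 1) * (1 - 2 * Bhat r) / r^2) * β r
      = 2 * ((n:ℝ) - 1) * Ahat * r * deriv Bhat r

/-! Differentiating the profile equation along the dilations `r ↦ 𝔅 (λ r)` shows that `φ = r 𝔅'`
solves the homogeneous equation. Writing `β = φ u` and `v = u'` leaves the first-order equation
`r 𝔅 v' + D v = 2 (n - 1) Â r`, where `D → n + 2` at `0` and `D → n - 1` at infinity. Near `0` this
gives a solution with `v → 0`, and normalizing `u → -1 / (2𝔟)` makes `β ~ r²`. At infinity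
`r 𝔅 → 0`, so the restoring term in the equation of `v / r` has unbounded strength and forces
`v / r → 2 Â` for every solution; hence `u / r² → Â` and `β = r³ 𝔅' (u / r²) → -2 Â`. A dilation
of `r` reduces `A₄` to `1`. -/

section Ratios

variable {α 𝕜 : Type*} [NormedField 𝕜] {l : Filter α} {f g : α → 𝕜} {c : 𝕜}

lemma isLittleO_sub_const_mul_iff_tendsto_div (hg : ∀ᶠ x in l, g x ≠ 0) :
    (fun x => f x - c * g x) =o[l] g ↔ Tendsto (fun x => f x / g x) l (𝓝 c) := by
  rw [isLittleO_iff_tendsto' (hg.mono fun x hx h => absurd h hx)]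
  refine (tendsto_congr' (hg.mono fun x hx => ?_)).trans tendsto_sub_nhds_zero_iff
  rw [sub_div, mul_div_cancel_right₀ c hx]

lemma isLittleO_rpow_rpow_atTop {p q : ℝ} (hpq : p < q) :
    (fun r : ℝ => r ^ p) =o[atTop] fun r => r ^ q := by
  refine (isLittleO_iff_tendsto' ((eventually_gt_atTop 0).mono fun r hr h =>
    absurd h (Real.rpow_pos_of_pos hr q).ne')).2 ?_
  refine (tendsto_rpow_neg_atTop (sub_pos.2 hpq)).congr'
    ((eventually_gt_atTop 0).mono fun r hr => ?_)
  rw [neg_sub, Real.rpow_sub hr]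

end Ratios

section Primitives

variable {E : Type*} [NormedAddCommGroup E] {f : ℝ → E} {a : ℝ}

lemma tendsto_nhdsGT_zero_of_norm_le_mul_abs_sub {C : ℝ}
    (hf : ∀ᶠ r in 𝓝[>] a, ‖f r‖ ≤ C * |r - a|) : Tendsto f (𝓝[>] a) (𝓝 0) := by
  have hcont : Continuous fun r : ℝ => C * |r - a| := by fun_prop
  refine squeeze_zero_norm' hf ?_
  simpa using (hcont.tendsto a).mono_left nhdsWithin_le_nhds

lemma intervalIntegrable_of_continuousOn_Ioi_of_isBigO_one (hf : ContinuousOn f (Ioi a))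
    (hO : f =O[𝓝[>] a] fun _ => (1 : ℝ)) {r : ℝ} (hr : a < r) :
    IntervalIntegrable f MeasureTheory.volume a r := by
  obtain ⟨C, hC⟩ := hO.bound
  obtain ⟨δ, hδ, hbound⟩ := mem_nhdsGT_iff_exists_Ioc_subset.1 hC
  have near : IntervalIntegrable f MeasureTheory.volume a δ := by
    rw [intervalIntegrable_iff_integrableOn_Ioc_of_le hδ.le]
    refine .of_bound measure_Ioc_lt_top
      ((hf.mono Ioc_subset_Ioi_self).aestronglyMeasurable measurableSet_Ioc) C ?_
    filter_upwards [MeasureTheory.ae_restrict_mem measurableSet_Ioc] with s hs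
    simpa using hbound hs
  refine near.trans (ContinuousOn.intervalIntegrable (hf.mono fun s hs => ?_))
  exact (lt_min hδ hr).trans_le hs.1

variable [NormedSpace ℝ E]

lemma hasDerivAt_integral_of_continuousOn_Ioi_of_isBigO_one [CompleteSpace E]
    (hf : ContinuousOn f (Ioi a)) (hO : f =O[𝓝[>] a] fun _ => (1 : ℝ)) {r : ℝ} (hr : a < r) :
    HasDerivAt (fun r => ∫ s in a..r, f s) (f r) r :=
  intervalIntegral.integral_hasDerivAt_right
    (intervalIntegrable_of_continuousOn_Ioi_of_isBigO_one hf hO hr)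
    (hf.stronglyMeasurableAtFilter isOpen_Ioi r hr) (hf.continuousAt (Ioi_mem_nhds hr))

lemma tendsto_integral_nhdsGT_of_isBigO_one (hO : f =O[𝓝[>] a] fun _ => (1 : ℝ)) :
    Tendsto (fun r => ∫ s in a..r, f s) (𝓝[>] a) (𝓝 0) := by
  obtain ⟨C, hC⟩ := hO.bound
  obtain ⟨δ, hδ, hbound⟩ := mem_nhdsGT_iff_exists_Ioc_subset.1 hC
  refine tendsto_nhdsGT_zero_of_norm_le_mul_abs_sub (C := C) ?_
  filter_upwards [Ioc_mem_nhdsGT hδ] with r hr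
  refine intervalIntegral.norm_integral_le_of_norm_le_const fun s hs => ?_
  rw [uIoc_of_le hr.1.le] at hs
  simpa using hbound ⟨hs.1, hs.2.trans hr.2⟩

lemma exists_hasDerivAt_of_continuousOn [CompleteSpace E] {s : Set ℝ} (hs : IsOpen s)
    [hs' : s.OrdConnected] (hf : ContinuousOn f s) :
    ∃ F : ℝ → E, ∀ r ∈ s, HasDerivAt F (f r) r := by
  rcases s.eq_empty_or_nonempty with rfl | ⟨c, hc⟩
  · exact ⟨0, fun r hr => hr.elim⟩
  · refine ⟨fun r => ∫ x in c..r, f x, fun r hr => ?_⟩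
    exact intervalIntegral.integral_hasDerivAt_right
      (hf.mono (hs'.uIcc_subset hc hr)).intervalIntegrable
      (hf.stronglyMeasurableAtFilter hs r hr) (hf.continuousAt (hs.mem_nhds hr))

end Primitives

section LimitsAtTop

lemma tendsto_atTop_atTop_of_le_deriv {f f' : ℝ → ℝ} {c : ℝ} (hc : 0 < c)
    (hf : ∀ᶠ r in atTop, HasDerivAt f (f' r) r) (hf' : ∀ᶠ r in atTop, c ≤ f' r) :
    Tendsto f atTop atTop := by
  obtain ⟨S, hS⟩ := eventually_atTop.1 (hf.and hf')
  have hgrowth : ∀ r ≥ S, f S + c * (r - S) ≤ f r := fun r hr => by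
    have := (convex_Ici S).mul_sub_le_image_sub_of_le_deriv
      (fun x hx => (hS x hx).1.continuousAt.continuousWithinAt)
      (fun x hx => (hS x (interior_subset hx)).1.differentiableAt.differentiableWithinAt)
      (fun x hx => (hS x (interior_subset hx)).1.deriv ▸ (hS x (interior_subset hx)).2)
      S self_mem_Ici r hr hr
    linarith
  have hline : Tendsto (fun r => f S + c * (r - S)) atTop atTop :=
    tendsto_atTop_add_const_left _ _
      ((tendsto_atTop_add_const_right _ (-S) tendsto_id).const_mul_atTop hc)
  exact tendsto_atTop_mono' _ ((eventually_ge_atTop S).mono hgrowth) hline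

lemma isLittleO_atTop_of_deriv_isLittleO {E : Type*} [NormedAddCommGroup E] [NormedSpace ℝ E]
    {f f' : ℝ → E} {g g' : ℝ → ℝ} (hf : ∀ᶠ r in atTop, HasDerivAt f (f' r) r)
    (hg : ∀ᶠ r in atTop, HasDerivAt g (g' r) r) (hg' : ∀ᶠ r in atTop, 0 ≤ g' r)
    (hgt : Tendsto g atTop atTop) (h : f' =o[atTop] g') : f =o[atTop] g := by
  refine isLittleO_iff.2 fun c hc => ?_
  obtain ⟨S, hS⟩ := eventually_atTop.1
    ((hf.and hg).and (hg'.and (isLittleO_iff.1 h (half_pos hc))))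
  have hfence : ∀ r ≥ S, ‖f r‖ ≤ ‖f S‖ + c / 2 * (g r - g S) := fun r hr => by
    refine image_norm_le_of_norm_deriv_right_le_deriv_boundary' (a := S) (b := r) (f := f)
      (f' := f') (B := fun x => ‖f S‖ + c / 2 * (g x - g S)) (B' := fun x => c / 2 * g' x)
      (fun x hx => (hS x hx.1).1.1.continuousAt.continuousWithinAt)
      (fun x hx => (hS x hx.1).1.1.hasDerivWithinAt) (by simp) (fun x hx => ?_) (fun x hx => ?_)
      (fun x hx => ?_) ⟨hr, le_rfl⟩
    · have := (hS x hx.1).1.2.continuousAt.continuousWithinAt (s := Icc S r)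
      exact ((this.sub_const _).const_mul _).const_add _
    · exact ((((hS x hx.1).1.2.sub_const _).const_mul _).const_add _).hasDerivWithinAt
    · obtain ⟨h0, hbound⟩ := (hS x hx.1).2
      rwa [Real.norm_of_nonneg h0] at hbound
  filter_upwards [eventually_ge_atTop S, hgt.eventually_ge_atTop 0,
    (hgt.const_mul_atTop (half_pos hc)).eventually_ge_atTop (‖f S‖ - c / 2 * g S)] with r hr h0 h1
  rw [Real.norm_of_nonneg h0]
  linarith [hfence r hr]

lemma tendsto_div_atTop_of_deriv_div {f f' g g' : ℝ → ℝ} {l : ℝ}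
    (hf : ∀ᶠ r in atTop, HasDerivAt f (f' r) r) (hg : ∀ᶠ r in atTop, HasDerivAt g (g' r) r)
    (hg' : ∀ᶠ r in atTop, 0 < g' r) (hgt : Tendsto g atTop atTop)
    (h : Tendsto (fun r => f' r / g' r) atTop (𝓝 l)) :
    Tendsto (fun r => f r / g r) atTop (𝓝 l) := by
  have hderiv : (fun r => f' r - l * g' r) =o[atTop] g' :=
    (isLittleO_sub_const_mul_iff_tendsto_div (hg'.mono fun r h₀ => h₀.ne')).2 h
  refine (isLittleO_sub_const_mul_iff_tendsto_div (hgt.eventually_ne_atTop 0)).1 ?_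
  exact isLittleO_atTop_of_deriv_isLittleO
    (by filter_upwards [hf, hg] with r hfr hgr using hfr.sub (hgr.const_mul l))
    hg (hg'.mono fun r h₀ => h₀.le) hgt hderiv

end LimitsAtTop

section FirstOrderLinear

variable {g k : ℝ → ℝ} {a : ℝ}

lemma exists_tendsto_nhdsGT_zero_of_linearODE (hk : ContinuousOn k (Ioi a))
    (hg : ContinuousOn g (Ioi a)) (hk_nonneg : ∀ᶠ r in 𝓝[>] a, 0 ≤ k r)
    (hgO : g =O[𝓝[>] a] fun _ => (1 : ℝ)) :
    ∃ v : ℝ → ℝ, (∀ r, a < r → HasDerivAt v (g r - k r * v r) r) ∧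
      Tendsto v (𝓝[>] a) (𝓝 0) := by
  obtain ⟨K, hK⟩ := exists_hasDerivAt_of_continuousOn isOpen_Ioi hk
  obtain ⟨C, hC⟩ := hgO.bound
  obtain ⟨δ, hδ, hnear⟩ := mem_nhdsGT_iff_exists_Ioc_subset.1 (hk_nonneg.and hC)
  have hK_mono : MonotoneOn K (Ioc a δ) :=
    monotoneOn_of_hasDerivWithinAt_nonneg (convex_Ioc a δ)
      (fun r hr => (hK r hr.1).continuousAt.continuousWithinAt)
      (fun r hr => (hK r (interior_subset hr).1).hasDerivWithinAt)
      (fun r hr => (hnear (interior_subset hr)).1)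
  have hM_cont : ContinuousOn (fun s => Real.exp (K s) * g s) (Ioi a) :=
    (Real.continuous_exp.comp_continuousOn
      fun r hr => (hK r hr).continuousAt.continuousWithinAt).mul hg
  have hM_le : ∀ r ∈ Ioc a δ, ∀ s ∈ Ioc a r, ‖Real.exp (K s) * g s‖ ≤ Real.exp (K r) * C := by
    intro r hr s hs
    have hs' : s ∈ Ioc a δ := ⟨hs.1, hs.2.trans hr.2⟩
    rw [norm_mul, Real.norm_of_nonneg (Real.exp_pos _).le]
    gcongr
    · exact hK_mono hs' hr hs.2
    · simpa using (hnear hs').2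
  have hM_O : (fun s => Real.exp (K s) * g s) =O[𝓝[>] a] fun _ => (1 : ℝ) :=
    .of_bound (Real.exp (K δ) * C) <| by
      filter_upwards [Ioc_mem_nhdsGT hδ] with s hs
      simpa using hM_le δ ⟨hδ, le_rfl⟩ s hs
  refine ⟨fun r => (∫ s in a..r, Real.exp (K s) * g s) / Real.exp (K r), fun r hr => ?_, ?_⟩
  · refine ((hasDerivAt_integral_of_continuousOn_Ioi_of_isBigO_one hM_cont hM_O hr).div
      (hK r hr).exp (Real.exp_ne_zero _)).congr_deriv ?_
    field_simp
  · refine tendsto_nhdsGT_zero_of_norm_le_mul_abs_sub (C := C) ?_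
    filter_upwards [Ioc_mem_nhdsGT hδ] with r hr
    rw [norm_div, Real.norm_of_nonneg (Real.exp_pos (K r)).le, div_le_iff₀' (Real.exp_pos _),
      ← mul_assoc]
    refine intervalIntegral.norm_integral_le_of_norm_le_const fun s hs => hM_le r hr s ?_
    rwa [uIoc_of_le hr.1.le] at hs

lemma tendsto_atTop_of_linearODE {y : ℝ → ℝ} {c l : ℝ} (hk : ContinuousOn k (Ioi a))
    (hc : 0 < c) (hck : ∀ᶠ r in atTop, c ≤ k r)
    (hy : ∀ r, a < r → HasDerivAt y (g r - k r * y r) r)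
    (hgk : Tendsto (fun r => g r / k r) atTop (𝓝 l)) : Tendsto y atTop (𝓝 l) := by
  obtain ⟨K, hK⟩ := exists_hasDerivAt_of_continuousOn isOpen_Ioi hk
  have hK' : ∀ᶠ r in atTop, HasDerivAt K (k r) r := (eventually_gt_atTop a).mono hK
  have hM : ∀ᶠ r in atTop,
      HasDerivAt (fun r => Real.exp (K r)) (Real.exp (K r) * k r) r := hK'.mono fun r h => h.exp
  have hMy : ∀ᶠ r in atTop,
      HasDerivAt (fun r => Real.exp (K r) * y r) (Real.exp (K r) * g r) r := by
    filter_upwards [hM, eventually_gt_atTop a] with r hMr hr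
    exact (hMr.mul (hy r hr)).congr_deriv (by ring)
  have hquot : Tendsto (fun r => Real.exp (K r) * y r / Real.exp (K r)) atTop (𝓝 l) := by
    refine tendsto_div_atTop_of_deriv_div hMy hM ?_
      (Real.tendsto_exp_atTop.comp (tendsto_atTop_atTop_of_le_deriv hc hK' hck)) ?_
    · exact hck.mono fun r h => mul_pos (Real.exp_pos _) (hc.trans_le h)
    · simpa only [mul_div_mul_left _ _ (Real.exp_ne_zero _)] using hgk
  simpa only [mul_div_cancel_left₀ _ (Real.exp_ne_zero _)] using hquot

end FirstOrderLinear

section SecondOrderLinear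

/-- `y`, with first and second derivatives `y'` and `y''`, solves the second-order linear equation
`P y'' + p y' + q y = f` on the set `s`. Derivatives are data, as in `IsBetaSol`. -/
def IsLinearODESol {𝕜 : Type*} [NontriviallyNormedField 𝕜] (s : Set 𝕜)
    (P p q f y y' y'' : 𝕜 → 𝕜) : Prop :=
  (∀ r ∈ s, HasDerivAt y (y' r) r) ∧ (∀ r ∈ s, HasDerivAt y' (y'' r) r) ∧
    ∀ r ∈ s, P r * y'' r + p r * y' r + q r * y r = f r

variable {𝕜 : Type*} [NontriviallyNormedField 𝕜] {s : Set 𝕜}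
  {P p q f φ φ' φ'' y y' y'' u v v' : 𝕜 → 𝕜}

lemma IsLinearODESol.mul_of_reduced (hφ : IsLinearODESol s P p q 0 φ φ' φ'')
    (hu : ∀ r ∈ s, HasDerivAt u (v r) r) (hv : ∀ r ∈ s, HasDerivAt v (v' r) r)
    (heq : ∀ r ∈ s, P r * φ r * v' r + (2 * P r * φ' r + p r * φ r) * v r = f r) :
    IsLinearODESol s P p q f (fun r => φ r * u r) (fun r => φ' r * u r + φ r * v r)
      (fun r => φ'' r * u r + φ' r * v r + (φ' r * v r + φ r * v' r)) := by
  obtain ⟨hφ₁, hφ₂, hφeq⟩ := hφ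
  refine ⟨fun r hr => (hφ₁ r hr).mul (hu r hr), fun r hr =>
    ((hφ₂ r hr).mul (hu r hr)).add ((hφ₁ r hr).mul (hv r hr)), fun r hr => ?_⟩
  have hφr : P r * φ'' r + p r * φ' r + q r * φ r = 0 := hφeq r hr
  linear_combination u r * hφr + heq r hr

lemma IsLinearODESol.exists_reduced (hφ : IsLinearODESol s P p q 0 φ φ' φ'')
    (hφ₀ : ∀ r ∈ s, φ r ≠ 0) (hy : IsLinearODESol s P p q f y y' y'') :
    ∃ v v' : 𝕜 → 𝕜, (∀ r ∈ s, HasDerivAt (fun r => y r / φ r) (v r) r) ∧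
      (∀ r ∈ s, HasDerivAt v (v' r) r) ∧
      ∀ r ∈ s, P r * φ r * v' r + (2 * P r * φ' r + p r * φ r) * v r = f r := by
  obtain ⟨hφ₁, hφ₂, hφeq⟩ := hφ
  obtain ⟨hy₁, hy₂, hyeq⟩ := hy
  refine ⟨fun r => (y' r * φ r - y r * φ' r) / φ r ^ 2,
    fun r => (y'' r - y r / φ r * φ'' r) / φ r
      - 2 * φ' r / φ r * ((y' r * φ r - y r * φ' r) / φ r ^ 2), fun r hr => ?_,
    fun r hr => ?_, fun r hr => ?_⟩
  · exact (hy₁ r hr).div (hφ₁ r hr) (hφ₀ r hr)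
  · have h₀ := hφ₀ r hr
    refine ((((hy₂ r hr).mul (hφ₁ r hr)).sub ((hy₁ r hr).mul (hφ₂ r hr))).div
      ((hφ₁ r hr).pow 2) (pow_ne_zero 2 h₀)).congr_deriv ?_
    simp only [Pi.mul_apply, Pi.sub_apply, Pi.pow_apply]
    field_simp
    ring
  · have h₀ := hφ₀ r hr
    have hφr : P r * φ'' r + p r * φ' r + q r * φ r = 0 := hφeq r hr
    rw [← hyeq r hr]
    field_simp
    linear_combination -y r * φ r * hφr

end SecondOrderLinear

section Dilation

variable {n : ℕ} {a A : ℝ} {B β β' β'' : ℝ → ℝ}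

lemma IsBetaSol.comp_mul_left (h : IsBetaSol n a B β β' β'') (hA : 0 < A) :
    IsBetaSol n a (fun r => B (A * r)) (fun r => β (A * r) / A ^ 2) (fun r => β' (A * r) / A)
      (fun r => β'' (A * r)) := by
  have chain : ∀ {y y' : ℝ → ℝ}, (∀ r, 0 < r → HasDerivAt y (y' r) r) → ∀ r, 0 < r →
      HasDerivAt (fun r => y (A * r)) (y' (A * r) * A) r := fun hy r hr =>
    (hy (A * r) (mul_pos hA hr)).comp r (by simpa using (hasDerivAt_id r).const_mul A)
  obtain ⟨h₁, h₂, heq⟩ := h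
  refine ⟨fun r hr => ((chain h₁ r hr).div_const (A ^ 2)).congr_deriv (by field_simp),
    fun r hr => ((chain h₂ r hr).div_const A).congr_deriv (by field_simp), fun r hr => ?_⟩
  have hB' : deriv (fun r => B (A * r)) = fun r => A * deriv B (A * r) :=
    funext fun r => deriv_comp_mul_left A B r
  have hB'' : deriv (fun r => A * deriv B (A * r)) r = A ^ 2 * deriv (deriv B) (A * r) := by
    rw [deriv_const_mul_field, deriv_comp_mul_left A (deriv B) r, smul_eq_mul]
    ring
  have hAr := heq (A * r) (mul_pos hA hr)
  simp only [hB', hB'']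
  field_simp at hAr ⊢
  linear_combination hAr

lemma isLittleO_comp_mul_left_div_sq (hA : 0 < A)
    (h : (fun r => β r - r ^ 2) =o[𝓝[>] 0] fun r : ℝ => r ^ 2) :
    (fun r => β (A * r) / A ^ 2 - r ^ 2) =o[𝓝[>] 0] fun r : ℝ => r ^ 2 := by
  have hscale : Tendsto (fun r => A * r) (𝓝[>] 0) (𝓝[>] 0) := by
    simpa only [mul_zero, id] using
      TendstoNhdsWithinIoi.const_mul hA (tendsto_id (x := 𝓝[>] (0 : ℝ)))
  refine (((h.comp_tendsto hscale).const_mul_left (A ^ 2)⁻¹).congr (fun r => ?_)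
    fun r => ?_).of_const_mul_right (c := A ^ 2)
  · simp only [Function.comp_apply]
    field_simp
  · simp only [Function.comp_apply, mul_pow]

end Dilation

namespace BryantProfile

variable {n : ℕ} (𝔅 : BryantProfile n)

lemma pos {r : ℝ} (hr : 0 < r) : 0 < 𝔅.toFun r := (𝔅.mem_Ioc r hr.le).1

lemma contDiffOn_Ioi : ContDiffOn ℝ (⊤ : ℕ∞) 𝔅.toFun (Ioi 0) :=
  𝔅.smooth.mono Ioi_subset_Ici_self

lemma contDiffOn_deriv : ContDiffOn ℝ (⊤ : ℕ∞) (deriv 𝔅.toFun) (Ioi 0) :=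
  𝔅.contDiffOn_Ioi.deriv_of_isOpen isOpen_Ioi le_rfl

lemma hasDerivAt {r : ℝ} (hr : 0 < r) : HasDerivAt 𝔅.toFun (deriv 𝔅.toFun r) r :=
  ((𝔅.contDiffOn_Ioi.differentiableOn (by simp)).differentiableAt (Ioi_mem_nhds hr)).hasDerivAt

lemma hasDerivAt_deriv {r : ℝ} (hr : 0 < r) :
    HasDerivAt (deriv 𝔅.toFun) (deriv (deriv 𝔅.toFun) r) r :=
  ((𝔅.contDiffOn_deriv.differentiableOn (by simp)).differentiableAt (Ioi_mem_nhds hr)).hasDerivAt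

lemma hasDerivAt_deriv_deriv {r : ℝ} (hr : 0 < r) :
    HasDerivAt (deriv (deriv 𝔅.toFun)) (deriv (deriv (deriv 𝔅.toFun)) r) r :=
  (((𝔅.contDiffOn_deriv.deriv_of_isOpen (m := (⊤ : ℕ∞)) isOpen_Ioi le_rfl).differentiableOn
    (by simp)).differentiableAt (Ioi_mem_nhds hr)).hasDerivAt

lemma tendsto_one_sub_div_sq :
    Tendsto (fun r => (1 - 𝔅.toFun r) / r ^ 2) (𝓝[>] 0) (𝓝 𝔅.b) := by
  refine (isLittleO_sub_const_mul_iff_tendsto_div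
    (eventually_mem_nhdsWithin.mono fun r (hr : 0 < r) => (pow_pos hr 2).ne')).1 ?_
  have hpow : (fun r : ℝ => r ^ 4) =o[𝓝[>] 0] fun r => r ^ 2 :=
    (isLittleO_pow_pow (by simp)).mono nhdsWithin_le_nhds
  exact (𝔅.expand_zero.neg_left.congr_left fun r => by ring).trans_isLittleO hpow

lemma tendsto_nhdsGT_zero : Tendsto 𝔅.toFun (𝓝[>] 0) (𝓝 1) := by
  have h := 𝔅.smooth.continuousOn 0 self_mem_Ici
  rw [ContinuousWithinAt, 𝔅.val_zero] at h
  exact h.mono_left (nhdsWithin_mono 0 Ioi_subset_Ici_self)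

lemma tendsto_deriv_div : Tendsto (fun r => deriv 𝔅.toFun r / r) (𝓝[>] 0) (𝓝 (-2 * 𝔅.b)) := by
  refine (isLittleO_sub_const_mul_iff_tendsto_div
    (eventually_mem_nhdsWithin.mono fun r (hr : 0 < r) => hr.ne')).1 ?_
  have hpow : (fun r : ℝ => r ^ 3) =o[𝓝[>] 0] fun r => r :=
    (isLittleO_pow_id (by simp)).mono nhdsWithin_le_nhds
  exact (𝔅.expand_zero_deriv.congr_left fun r => by ring).trans_isLittleO hpow

lemma tendsto_sq_mul_atTop : Tendsto (fun r => r ^ 2 * 𝔅.toFun r) atTop (𝓝 1) := by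
  have hlead : (fun r => 𝔅.toFun r - 1 * r ^ (-2 : ℝ)) =o[atTop] fun r => r ^ (-2 : ℝ) :=
    ((𝔅.expand_top.trans_isLittleO (isLittleO_rpow_rpow_atTop (by norm_num))).add
      ((isLittleO_rpow_rpow_atTop (p := -4) (by norm_num)).const_mul_left 𝔅.b2)).congr_left
      fun r => by ring
  have hpos : ∀ᶠ r : ℝ in atTop, r ^ (-2 : ℝ) ≠ 0 :=
    (eventually_gt_atTop 0).mono fun r hr => (Real.rpow_pos_of_pos hr _).ne'
  refine ((isLittleO_sub_const_mul_iff_tendsto_div hpos).1 hlead).congr'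
    ((eventually_gt_atTop 0).mono fun r hr => ?_)
  rw [Real.rpow_neg hr.le, div_inv_eq_mul, mul_comm]
  norm_cast

lemma tendsto_cube_mul_deriv_atTop :
    Tendsto (fun r => r ^ 3 * deriv 𝔅.toFun r) atTop (𝓝 (-2)) := by
  have hlead :
      (fun r => deriv 𝔅.toFun r - -2 * r ^ (-3 : ℝ)) =o[atTop] fun r => r ^ (-3 : ℝ) :=
    ((𝔅.expand_top_deriv.trans_isLittleO (isLittleO_rpow_rpow_atTop (by norm_num))).add
      ((isLittleO_rpow_rpow_atTop (p := -5) (by norm_num)).const_mul_left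
        (-4 * 𝔅.b2))).congr_left fun r => by ring
  have hpos : ∀ᶠ r : ℝ in atTop, r ^ (-3 : ℝ) ≠ 0 :=
    (eventually_gt_atTop 0).mono fun r hr => (Real.rpow_pos_of_pos hr _).ne'
  refine ((isLittleO_sub_const_mul_iff_tendsto_div hpos).1 hlead).congr'
    ((eventually_gt_atTop 0).mono fun r hr => ?_)
  rw [Real.rpow_neg hr.le, div_inv_eq_mul, mul_comm]
  norm_cast

lemma tendsto_atTop : Tendsto 𝔅.toFun atTop (𝓝 0) := by
  have h := 𝔅.tendsto_sq_mul_atTop.mul (tendsto_inv_atTop_zero.pow 2)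
  rw [zero_pow two_ne_zero, mul_zero] at h
  refine h.congr' ((eventually_gt_atTop 0).mono fun r hr => ?_)
  field_simp

lemma tendsto_mul_atTop : Tendsto (fun r => r * 𝔅.toFun r) atTop (𝓝[>] 0) := by
  refine tendsto_nhdsWithin_iff.2
    ⟨?_, (eventually_gt_atTop 0).mono fun r hr => mul_pos hr (𝔅.pos hr)⟩
  have h := 𝔅.tendsto_sq_mul_atTop.mul tendsto_inv_atTop_zero
  rw [mul_zero] at h
  refine h.congr' ((eventually_gt_atTop 0).mono fun r hr => ?_)
  field_simp

/-- `φ = r 𝔅'`, the derivative at `λ = 1` of `r ↦ 𝔅 (λ r)`: the Jacobi field of the profile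
equation along dilations. -/
noncomputable def dilationField (r : ℝ) : ℝ := r * deriv 𝔅.toFun r

lemma dilationField_neg {r : ℝ} (hr : 0 < r) : 𝔅.dilationField r < 0 :=
  mul_neg_of_pos_of_neg hr (𝔅.deriv_neg r hr)

lemma hasDerivAt_Eop {r : ℝ} (hr : 0 < r) :
    HasDerivAt (Eop n 𝔅.toFun)
      (𝔅.toFun r * deriv (deriv (deriv 𝔅.toFun)) r
        + ((n - 1) / r - 𝔅.toFun r / r) * deriv (deriv 𝔅.toFun) r
        - deriv 𝔅.toFun r ^ 2 / r - (n - 1 - 𝔅.toFun r) * deriv 𝔅.toFun r / r ^ 2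
        + 2 * (n - 1) * (1 - 2 * 𝔅.toFun r) * deriv 𝔅.toFun r / r ^ 2
        - 4 * (n - 1) * (1 - 𝔅.toFun r) * 𝔅.toFun r / r ^ 3) r := by
  have h₀ := 𝔅.hasDerivAt hr
  have h₁ := 𝔅.hasDerivAt_deriv hr
  have h₂ := 𝔅.hasDerivAt_deriv_deriv hr
  have hid := hasDerivAt_id r
  refine ((((h₀.mul h₂).sub ((h₁.pow 2).const_mul (1 / 2))).add
    (((h₀.const_sub ((n : ℝ) - 1)).mul h₁).div hid hr.ne')).add
    ((((h₀.const_sub 1).const_mul (2 * ((n : ℝ) - 1))).mul h₀).div (hid.pow 2)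
      (pow_ne_zero 2 hr.ne'))).congr_deriv ?_
  simp only [id, Pi.pow_apply, Pi.mul_apply, Nat.cast_ofNat, Nat.add_one_sub_one, pow_one]
  field_simp
  ring

lemma isLinearODESol_dilationField :
    IsLinearODESol (Ioi 0) 𝔅.toFun
      (fun r => (n - 1) / r - deriv 𝔅.toFun r - 𝔅.toFun r / r)
      (fun r => deriv (deriv 𝔅.toFun) r - deriv 𝔅.toFun r / r
        + 2 * (n - 1) * (1 - 2 * 𝔅.toFun r) / r ^ 2)
      0 𝔅.dilationField (fun r => deriv 𝔅.toFun r + r * deriv (deriv 𝔅.toFun) r)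
      (fun r => 2 * deriv (deriv 𝔅.toFun) r + r * deriv (deriv (deriv 𝔅.toFun)) r) := by
  refine ⟨fun r hr => ?_, fun r hr => ?_, fun r hr => ?_⟩
  · exact ((hasDerivAt_id r).mul (𝔅.hasDerivAt_deriv hr)).congr_deriv (by simp)
  · refine ((𝔅.hasDerivAt_deriv hr).add
      ((hasDerivAt_id r).mul (𝔅.hasDerivAt_deriv_deriv hr))).congr_deriv ?_
    simp only [id]
    ring
  · have hr₀ : r ≠ 0 := (mem_Ioi.1 hr).ne'
    have hE := 𝔅.soliton r hr
    have hE' := (𝔅.hasDerivAt_Eop hr).unique <| (hasDerivAt_const r 0).congr_of_eventuallyEq <|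
      (eventually_gt_nhds hr).mono fun s hs => 𝔅.soliton s hs
    rw [Eop] at hE
    rw [dilationField, Pi.zero_apply]
    -- By the dilation covariance of `Eop`, the left side is `r d/dr E_r[𝔅] + 2 E_r[𝔅]`.
    linear_combination (norm := (field_simp; ring)) 2 * hE + r * hE'

/-- The coefficient `D` of the reduced equation `IsReducedSol`, from which the profile equation has
eliminated the second derivative of `𝔅`. -/
noncomputable def reducedCoeff (r : ℝ) : ℝ :=
  3 * 𝔅.toFun r - (n - 1) - 4 * (n - 1) * ((1 - 𝔅.toFun r) * 𝔅.toFun r / 𝔅.dilationField r)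

/-- The equation `r 𝔅 v' + D v = 2 (n - 1) a r` on `(0, ∞)`, solved for `v'`. It is what `IsBetaSol`
becomes for `v = (β / φ)'`, by reduction of order. -/
def IsReducedSol (a : ℝ) (v : ℝ → ℝ) : Prop :=
  ∀ r, 0 < r → HasDerivAt v
    (2 * (n - 1) * a / 𝔅.toFun r - 𝔅.reducedCoeff r / (r * 𝔅.toFun r) * v r) r

lemma deriv_mul_reducedCoeff {r : ℝ} (hr : 0 < r) :
    deriv 𝔅.toFun r * 𝔅.reducedCoeff r =
      2 * 𝔅.toFun r * (deriv 𝔅.toFun r + r * deriv (deriv 𝔅.toFun) r)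
        + ((n - 1) / r - deriv 𝔅.toFun r - 𝔅.toFun r / r) * 𝔅.dilationField r := by
  have hE := 𝔅.soliton r hr
  have hB' := (𝔅.deriv_neg r hr).ne
  rw [Eop] at hE
  rw [reducedCoeff, dilationField]
  field_simp at hE ⊢
  linear_combination -hE

lemma continuousOn_reducedCoeff : ContinuousOn 𝔅.reducedCoeff (Ioi 0) := by
  have h₀ := 𝔅.contDiffOn_Ioi.continuousOn
  have hφ : ContinuousOn 𝔅.dilationField (Ioi 0) :=
    continuousOn_id.mul 𝔅.contDiffOn_deriv.continuousOn
  exact ((h₀.const_mul 3).sub continuousOn_const).sub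
    ((((continuousOn_const.sub h₀).mul h₀).div hφ
      fun r hr => (𝔅.dilationField_neg hr).ne).const_mul _)

lemma tendsto_reducedCoeff_nhdsGT_zero : Tendsto 𝔅.reducedCoeff (𝓝[>] 0) (𝓝 (n + 2)) := by
  have hb := 𝔅.b_pos.ne'
  have hquot : Tendsto (fun r => (1 - 𝔅.toFun r) * 𝔅.toFun r / 𝔅.dilationField r) (𝓝[>] 0)
      (𝓝 (𝔅.b * 1 / (-2 * 𝔅.b))) := by
    refine ((𝔅.tendsto_one_sub_div_sq.mul 𝔅.tendsto_nhdsGT_zero).div 𝔅.tendsto_deriv_div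
      (mul_ne_zero (by simp) hb)).congr' (eventually_mem_nhdsWithin.mono fun r (hr : 0 < r) => ?_)
    have hB' := (𝔅.deriv_neg r hr).ne
    simp only [Pi.div_apply, dilationField]
    field_simp
  convert! ((𝔅.tendsto_nhdsGT_zero.const_mul 3).sub_const ((n : ℝ) - 1)).sub
    (hquot.const_mul (4 * ((n : ℝ) - 1))) using 2
  field_simp
  ring

lemma tendsto_reducedCoeff_atTop : Tendsto 𝔅.reducedCoeff atTop (𝓝 (n - 1)) := by
  have hquot : Tendsto (fun r => (1 - 𝔅.toFun r) * 𝔅.toFun r / 𝔅.dilationField r) atTop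
      (𝓝 ((1 - 0) * 1 / (-2))) := by
    refine (((𝔅.tendsto_atTop.const_sub 1).mul 𝔅.tendsto_sq_mul_atTop).div
      𝔅.tendsto_cube_mul_deriv_atTop (by simp)).congr'
      ((eventually_gt_atTop 0).mono fun r hr => ?_)
    have hB' := (𝔅.deriv_neg r hr).ne
    simp only [Pi.div_apply, dilationField]
    field_simp
  convert! ((𝔅.tendsto_atTop.const_mul 3).sub_const ((n : ℝ) - 1)).sub
    (hquot.const_mul (4 * ((n : ℝ) - 1))) using 2
  ring

lemma reduced_eq_iff_eq_sub {a r v v' : ℝ} (hr : 0 < r) :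
    𝔅.toFun r * 𝔅.dilationField r * v'
        + (2 * 𝔅.toFun r * (deriv 𝔅.toFun r + r * deriv (deriv 𝔅.toFun) r)
          + ((n - 1) / r - deriv 𝔅.toFun r - 𝔅.toFun r / r) * 𝔅.dilationField r) * v
        = 2 * (n - 1) * a * r * deriv 𝔅.toFun r ↔
      v' = 2 * (n - 1) * a / 𝔅.toFun r - 𝔅.reducedCoeff r / (r * 𝔅.toFun r) * v := by
  have hB := (𝔅.pos hr).ne'
  have hφ := (𝔅.dilationField_neg hr).ne
  have hrhs : 𝔅.toFun r * 𝔅.dilationField r *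
      (2 * (n - 1) * a / 𝔅.toFun r - 𝔅.reducedCoeff r / (r * 𝔅.toFun r) * v) =
        2 * (n - 1) * a * r * deriv 𝔅.toFun r - deriv 𝔅.toFun r * 𝔅.reducedCoeff r * v := by
    rw [dilationField]
    field_simp
  rw [← 𝔅.deriv_mul_reducedCoeff hr, ← mul_right_inj' (mul_ne_zero hB hφ) (b := v'), hrhs,
    eq_sub_iff_add_eq]

lemma isBetaSol_dilationField_mul {a : ℝ} {u v : ℝ → ℝ}
    (hu : ∀ r, 0 < r → HasDerivAt u (v r) r) (hv : 𝔅.IsReducedSol a v) :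
    ∃ β' β'' : ℝ → ℝ, IsBetaSol n a 𝔅.toFun (fun r => 𝔅.dilationField r * u r) β' β'' :=
  ⟨_, _, 𝔅.isLinearODESol_dilationField.mul_of_reduced hu hv
    (f := fun r => 2 * (n - 1) * a * r * deriv 𝔅.toFun r)
    fun _ hr => (𝔅.reduced_eq_iff_eq_sub hr).2 rfl⟩

lemma exists_isReducedSol_of_isBetaSol {a : ℝ} {β β' β'' : ℝ → ℝ}
    (hβ : IsBetaSol n a 𝔅.toFun β β' β'') :
    ∃ v : ℝ → ℝ, (∀ r, 0 < r → HasDerivAt (fun r => β r / 𝔅.dilationField r) (v r) r) ∧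
      𝔅.IsReducedSol a v := by
  obtain ⟨v, v', hu, hv, heq⟩ := 𝔅.isLinearODESol_dilationField.exists_reduced
    (fun r hr => (𝔅.dilationField_neg hr).ne) hβ
  exact ⟨v, hu, fun r hr => (hv r hr).congr_deriv ((𝔅.reduced_eq_iff_eq_sub hr).1 (heq r hr))⟩

lemma exists_isReducedSol_tendsto_nhdsGT_zero (a : ℝ) :
    ∃ v : ℝ → ℝ, 𝔅.IsReducedSol a v ∧ Tendsto v (𝓝[>] 0) (𝓝 0) := by
  have hB := 𝔅.contDiffOn_Ioi.continuousOn
  refine exists_tendsto_nhdsGT_zero_of_linearODE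
    (𝔅.continuousOn_reducedCoeff.div (continuousOn_id.mul hB)
      fun r hr => (mul_pos hr (𝔅.pos hr)).ne')
    (continuousOn_const.div hB fun r hr => (𝔅.pos hr).ne') ?_
    ((tendsto_const_nhds.div 𝔅.tendsto_nhdsGT_zero one_ne_zero).isBigO_one ℝ)
  filter_upwards [𝔅.tendsto_reducedCoeff_nhdsGT_zero.eventually_const_le (by positivity),
    eventually_mem_nhdsWithin] with r hD hr
  exact div_nonneg hD (mul_pos hr (𝔅.pos hr)).le

theorem exists_isBetaSol (a : ℝ) :
    ∃ β β' β'' : ℝ → ℝ, IsBetaSol n a 𝔅.toFun β β' β'' ∧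
      (fun r => β r - r ^ 2) =o[𝓝[>] 0] fun r : ℝ => r ^ 2 := by
  obtain ⟨v, hv, hv₀⟩ := 𝔅.exists_isReducedSol_tendsto_nhdsGT_zero a
  have hv_cont : ContinuousOn v (Ioi 0) := fun r hr => (hv r hr).continuousAt.continuousWithinAt
  have hv_O := hv₀.isBigO_one ℝ
  set u : ℝ → ℝ := fun r => -1 / (2 * 𝔅.b) + ∫ s in (0 : ℝ)..r, v s
  have hu : ∀ r, 0 < r → HasDerivAt u (v r) r := fun r hr =>
    (hasDerivAt_integral_of_continuousOn_Ioi_of_isBigO_one hv_cont hv_O hr).const_add _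
  have hu₀ : Tendsto u (𝓝[>] 0) (𝓝 (-1 / (2 * 𝔅.b))) := by
    simpa only [add_zero] using
      (tendsto_integral_nhdsGT_of_isBigO_one hv_O).const_add (-1 / (2 * 𝔅.b))
  obtain ⟨β', β'', hβ⟩ := 𝔅.isBetaSol_dilationField_mul hu hv
  refine ⟨_, β', β'', hβ, ?_⟩
  have hquot : Tendsto (fun r => 𝔅.dilationField r * u r / r ^ 2) (𝓝[>] 0) (𝓝 1) := by
    have hprod := 𝔅.tendsto_deriv_div.mul hu₀
    rw [show -2 * 𝔅.b * (-1 / (2 * 𝔅.b)) = 1 by field_simp [𝔅.b_pos.ne']] at hprod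
    refine hprod.congr' (eventually_mem_nhdsWithin.mono fun r (hr : 0 < r) => ?_)
    simp only [dilationField]
    field_simp
  have hsq : ∀ᶠ r : ℝ in 𝓝[>] 0, r ^ 2 ≠ 0 :=
    eventually_mem_nhdsWithin.mono fun r (hr : 0 < r) => (pow_pos hr 2).ne'
  simpa only [one_mul] using (isLittleO_sub_const_mul_iff_tendsto_div hsq).2 hquot

lemma tendsto_div_id_of_isReducedSol (hn : 2 ≤ n) {a : ℝ} {v : ℝ → ℝ}
    (hv : 𝔅.IsReducedSol a v) :
    Tendsto (fun r => v r / r) atTop (𝓝 (2 * a)) := by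
  have hn' : (0 : ℝ) < n - 1 := sub_pos.2 (by exact_mod_cast hn)
  have hB := 𝔅.contDiffOn_Ioi.continuousOn
  have hnum : Tendsto (fun r => 𝔅.reducedCoeff r + 𝔅.toFun r) atTop (𝓝 (n - 1)) := by
    simpa only [add_zero] using 𝔅.tendsto_reducedCoeff_atTop.add 𝔅.tendsto_atTop
  have hk : Tendsto (fun r => (𝔅.reducedCoeff r + 𝔅.toFun r) / (r * 𝔅.toFun r)) atTop atTop :=
    hnum.pos_mul_atTop hn' 𝔅.tendsto_mul_atTop.inv_tendsto_nhdsGT_zero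
  refine tendsto_atTop_of_linearODE (a := 0) (g := fun r => 2 * (n - 1) * a / (r * 𝔅.toFun r))
    (k := fun r => (𝔅.reducedCoeff r + 𝔅.toFun r) / (r * 𝔅.toFun r))
    ((𝔅.continuousOn_reducedCoeff.add hB).div (continuousOn_id.mul hB)
      fun r hr => (mul_pos hr (𝔅.pos hr)).ne')
    one_pos (hk.eventually_ge_atTop 1) (fun r hr => ?_) ?_
  · have hBr := (𝔅.pos hr).ne'
    refine ((hv r hr).div (hasDerivAt_id r) hr.ne').congr_deriv ?_
    simp only [id]
    field_simp
    ring
  · have hquot := (tendsto_const_nhds (x := 2 * ((n : ℝ) - 1) * a)).div hnum hn'.ne'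
    rw [show 2 * ((n : ℝ) - 1) * a / (n - 1) = 2 * a by field_simp] at hquot
    refine hquot.congr' ((eventually_gt_atTop 0).mono fun r hr => ?_)
    exact (div_div_div_cancel_right₀ (mul_pos hr (𝔅.pos hr)).ne' _ _).symm

theorem tendsto_of_isBetaSol (hn : 2 ≤ n) {a : ℝ} {β β' β'' : ℝ → ℝ}
    (hβ : IsBetaSol n a 𝔅.toFun β β' β'') : Tendsto β atTop (𝓝 (-2 * a)) := by
  obtain ⟨v, hu, hv⟩ := 𝔅.exists_isReducedSol_of_isBetaSol hβ
  have hu_sq : Tendsto (fun r => β r / 𝔅.dilationField r / r ^ 2) atTop (𝓝 a) := by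
    refine tendsto_div_atTop_of_deriv_div ((eventually_gt_atTop 0).mono hu)
      (.of_forall fun r => hasDerivAt_pow 2 r)
      ((eventually_gt_atTop 0).mono fun r hr => by positivity) (tendsto_pow_atTop two_ne_zero) ?_
    convert! (𝔅.tendsto_div_id_of_isReducedSol hn hv).div_const 2 using 2
    · simp only [Nat.cast_ofNat, Nat.add_one_sub_one, pow_one]
      ring
    · ring
  refine (𝔅.tendsto_cube_mul_deriv_atTop.mul hu_sq).congr'
    ((eventually_gt_atTop 0).mono fun r hr => ?_)
  have hB' := (𝔅.deriv_neg r hr).ne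
  rw [dilationField]
  field_simp

end BryantProfile

theorem stmt6_general (n : ℕ) (hn : 2 ≤ n) (a A₄ : ℝ) (hA₄ : 0 < A₄) (𝔅 : BryantProfile n) :
    (∃ βp βp' βp'' : ℝ → ℝ,
      IsBetaSol n a (fun r => 𝔅.toFun (A₄ * r)) βp βp' βp'' ∧
      (fun r => βp r - r^2) =o[𝓝[>] (0:ℝ)] fun r => r^2) ∧
    (∀ β β' β'' : ℝ → ℝ,
      IsBetaSol n a (fun r => 𝔅.toFun (A₄ * r)) β β' β'' →
      Tendsto β atTop (𝓝 (-2 * a / A₄^2))) := by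
  refine ⟨?_, fun β β' β'' hβ => ?_⟩
  · obtain ⟨β, β', β'', hβ, hβ₀⟩ := 𝔅.exists_isBetaSol a
    exact ⟨_, _, _, hβ.comp_mul_left hA₄, isLittleO_comp_mul_left_div_sq hA₄ hβ₀⟩
  · have hγ := hβ.comp_mul_left (inv_pos.2 hA₄)
    simp only [mul_inv_cancel_left₀ hA₄.ne'] at hγ
    refine (((𝔅.tendsto_of_isBetaSol hn hγ).comp
      (tendsto_id.const_mul_atTop hA₄)).div_const (A₄ ^ 2)).congr fun r => ?_
    simp only [Function.comp_apply, id, inv_mul_cancel_left₀ hA₄.ne']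
    field_simp

/-- existence of a particular solution `β_p = r² + o(r²)` at `0`,
and convergence `β(r) → -2Â/A₄²` at `∞` for every solution, where `Â = 1/k + 1`. -/
theorem stmt6 (n k : ℕ) (hn : 2 ≤ n) (hk : 3 ≤ k) (A₄ : ℝ) (hA₄ : 0 < A₄)
    (𝔅 : BryantProfile n) :
    (∃ βp βp' βp'' : ℝ → ℝ,
      IsBetaSol n (1/(k:ℝ) + 1) (fun r => 𝔅.toFun (A₄ * r)) βp βp' βp'' ∧
      (fun r => βp r - r^2) =o[𝓝[>] (0:ℝ)] fun r => r^2) ∧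
    (∀ β β' β'' : ℝ → ℝ,
      IsBetaSol n (1/(k:ℝ) + 1) (fun r => 𝔅.toFun (A₄ * r)) β β' β'' →
      Filter.Tendsto β Filter.atTop (𝓝 (-2 * (1/(k:ℝ) + 1) / A₄^2))) :=
  stmt6_general n hn (1/(k:ℝ) + 1) A₄ hA₄ 𝔅
end
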